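/- Let p be an odd prime, q a power of p, and let P be a Sylow p-subgroup of the symplectic group Sp_12(F_q). Then the number of conjugacy classes of P equals v¹¹ + 15v¹⁰ + 112v⁹ + 547v⁸ + 1845v⁷ + 4121v⁶ + 5701v⁵ + 4560v⁴ + 1960v³ + 410v² + 36v + 1, where v = q − 1. -/

import Mathlib

/-!
In a finite group `U` the number of commuting pairs is `k(U) * |U|`. For a maximal unipotent
subgroup `U` of `Sp₂ₙ(q)` the Cayley transform identifies the commuting pairs in `U` with those in
its nilpotent Lie algebra `𝔲`, and since a matrix and its transpose have kernels of the same size,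
these are as many as the pairs `(f, x)` with `f ∈ 𝔲*` and `x` in the radical of the form
`f [·, ·]`.

Such pairs are counted by recursion on subquotients of `𝔲`. A central coordinate of `f` is either
zero, and then `𝔲` may be replaced by its quotient, or it is not. In the latter case a pair of
basis vectors whose bracket hits only that coordinate can be split off: the coadjoint action makes
one coordinate of `f` zero, and the radical equations then determine the corresponding two
coordinates of `x`. Where no such pair is left, there remain polynomial equations that can be
solved one variable at a time. All choices depend only on the root system and on which coordinates
are nonzero, so a single computation, valid for all odd `q`, gives the count as a polynomial in
`v = q - 1`.

That `U` is a Sylow subgroup follows from the presence of a regular unipotent element: it has only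
one fixed line in each successive quotient of the space by the standard flag, so every `p`-group
containing it stabilizes that flag.
-/

open Finset Function Matrix

section Coefficients

/-- The sum of two polynomials in `v`, given as in `Nat.ofDigits` by their lists of coefficients in
increasing degree. -/
def addCoeffs : List ℕ → List ℕ → List ℕ
  | [], l => l
  | a :: l, [] => a :: l
  | a :: l, b :: m => (a + b) :: addCoeffs l m

theorem ofDigits_addCoeffs (v : ℕ) (l m : List ℕ) :
    Nat.ofDigits v (addCoeffs l m) = Nat.ofDigits v l + Nat.ofDigits v m := by
  induction l, m using addCoeffs.induct with
  | case1 | case2 => simp [addCoeffs]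
  | case3 a l b m ih => simp only [addCoeffs, Nat.ofDigits_cons, ih]; ring

/-- The list of coefficients of `v ^ a * (v + 1) ^ b`. Here `v + 1` is the cardinality of the field,
and `v` counts its nonzero elements. -/
def powMulSuccPowCoeffs (a b : ℕ) : List ℕ :=
  List.replicate a 0 ++ (fun l => addCoeffs l (0 :: l))^[b] [1]

theorem ofDigits_powMulSuccPowCoeffs (v a b : ℕ) :
    Nat.ofDigits v (powMulSuccPowCoeffs a b) = v ^ a * (v + 1) ^ b := by
  have hpow : Nat.ofDigits v ((fun l => addCoeffs l (0 :: l))^[b] [1]) = (v + 1) ^ b := by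
    induction b with
    | zero => simp
    | succ b ih =>
      rw [iterate_succ_apply', ofDigits_addCoeffs, Nat.ofDigits_cons, ih]
      ring
  simp [powMulSuccPowCoeffs, Nat.ofDigits_append, Nat.ofDigits_replicate_zero, hpow]

end Coefficients

section Counting

variable {κ F : Type*} [Fintype κ] [DecidableEq κ] [Fintype F] [DecidableEq F]

theorem card_mul_sum_graph {w : κ} {g : (κ → F) → F} {h : (κ → F) → ℕ}
    (hg : ∀ σ a, g (update σ w a) = g σ) (hh : ∀ σ a, h (update σ w a) = h σ) :
    Fintype.card F * ∑ σ with σ w = g σ, h σ = ∑ σ, h σ := by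
  have hfiber : ∑ σ, h σ = ∑ _a : F, ∑ σ with σ w = g σ, h σ := by
    rw [← sum_product']
    refine sum_bij' (fun σ _ => (σ w, update σ w (g σ))) (fun aσ _ => update aσ.2 w aσ.1)
      ?_ ?_ ?_ ?_ ?_
    · simp [hg]
    · simp
    · simp
    · rintro ⟨a, σ⟩ hσ
      simp only [mem_product, mem_univ, mem_filter, true_and] at hσ
      simp [hg, ← hσ]
    · simp [hh]
  rw [hfiber, sum_const, card_univ, smul_eq_mul]

theorem card_mul_card_graph {w : κ} {g : (κ → F) → F} {A : (κ → F) → Prop} [DecidablePred A]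
    (hg : ∀ σ a, g (update σ w a) = g σ) (hA : ∀ σ a, A (update σ w a) ↔ A σ) :
    Fintype.card F * #{σ | A σ ∧ σ w = g σ} = #{σ | A σ} := by
  have := card_mul_sum_graph (h := fun σ => if A σ then 1 else 0) hg (by simp [hA])
  simpa only [← card_filter, filter_filter, and_comm] using this

theorem card_forall_mem_ne_zero [Zero F] {U : List κ} (hU : U.Nodup) :
    #{σ : κ → F | ∀ u ∈ U, σ u ≠ 0} =
      (Fintype.card F - 1) ^ U.length * Fintype.card F ^ (Fintype.card κ - U.length) := by
  have hpi : ({σ : κ → F | ∀ u ∈ U, σ u ≠ 0} : Finset (κ → F)) =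
      Fintype.piFinset fun u => if u ∈ U.toFinset then {0}ᶜ else univ := by
    ext σ
    simp only [mem_filter, mem_univ, true_and, Fintype.mem_piFinset]
    refine forall_congr' fun u => ?_
    by_cases hu : u ∈ U <;> simp [hu]
  rw [hpi, Fintype.card_piFinset]
  simp only [apply_ite Finset.card, card_compl, card_singleton, card_univ]
  rw [prod_ite, prod_const, prod_const, filter_not, card_sdiff_of_subset (filter_subset _ _),
    filter_mem_eq_inter, univ_inter, List.toFinset_card_of_nodup hU, card_univ]

end Counting

section PolynomialSystems

/-- An integer of the form `± 2 ^ k`, hence nonzero in every field of odd characteristic. The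
exponent is found by `Nat.log2` so that the predicate is decidable. -/
def IsTwoPowUpToSign (c : ℤ) : Prop := c.natAbs = 2 ^ c.natAbs.log2

instance : DecidablePred IsTwoPowUpToSign := fun _ => inferInstanceAs (Decidable (_ = _))

theorem IsTwoPowUpToSign.cast_ne_zero {F : Type*} [Ring F] [NoZeroDivisors F] (h2 : (2 : F) ≠ 0)
    {c : ℤ} (hc : IsTwoPowUpToSign c) : (c : F) ≠ 0 := fun h => by
  have hnat : ((c.natAbs : ℕ) : F) = 0 := by
    rcases Int.natAbs_eq c with h' | h' <;> rw [h'] at h <;> simpa using h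
  rw [hc, Nat.cast_pow] at hnat
  exact h2 (by simpa using eq_zero_of_pow_eq_zero hnat)

/-- A monomial with integer coefficient; the list `vars` has repetitions according to
multiplicity. -/
structure IntTerm (κ : Type*) where
  coeff : ℤ
  vars : List κ
deriving DecidableEq

/-- A polynomial with integer coefficients as an unreduced sum of terms, a representation on which
the kernel can compute. -/
abbrev IntPoly (κ : Type*) := List (IntTerm κ)

variable {κ : Type*}

section Eval

variable {F : Type*} [CommRing F]

namespace IntTerm

/-- The value of a term at the point `σ`. -/
def eval (σ : κ → F) (t : IntTerm κ) : F := t.coeff * (t.vars.map σ).prod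

/-- The product of two terms. -/
def mul (s t : IntTerm κ) : IntTerm κ := ⟨s.coeff * t.coeff, s.vars ++ t.vars⟩

theorem eval_mul (σ : κ → F) (s t : IntTerm κ) : (s.mul t).eval σ = s.eval σ * t.eval σ := by
  simp only [eval, mul, List.map_append, List.prod_append]
  push_cast
  ring

/-- A term that is visibly invertible, in odd characteristic, wherever the variables in `U` are
nonzero. -/
def IsUnitOn (U : List κ) (t : IntTerm κ) : Prop :=
  IsTwoPowUpToSign t.coeff ∧ ∀ u ∈ t.vars, u ∈ U

instance [DecidableEq κ] (U : List κ) : DecidablePred (IsUnitOn U) :=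
  fun _ => inferInstanceAs (Decidable (_ ∧ _))

theorem IsUnitOn.eval_ne_zero [IsDomain F] (h2 : (2 : F) ≠ 0) {U : List κ} {t : IntTerm κ}
    (ht : t.IsUnitOn U) {σ : κ → F} (hσ : ∀ u ∈ U, σ u ≠ 0) : t.eval σ ≠ 0 := by
  refine mul_ne_zero (ht.1.cast_ne_zero h2) (List.prod_ne_zero fun h => ?_)
  obtain ⟨u, hu, hu0⟩ := List.mem_map.mp h
  exact hσ u (ht.2 u hu) hu0

end IntTerm

namespace IntPoly

/-- The value of a polynomial at the point `σ`. -/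
def eval (σ : κ → F) (p : IntPoly κ) : F := (p.map (IntTerm.eval σ)).sum

@[simp] theorem eval_nil (σ : κ → F) : eval σ [] = 0 := rfl

@[simp] theorem eval_cons (σ : κ → F) (t : IntTerm κ) (p : IntPoly κ) :
    eval σ (t :: p) = t.eval σ + eval σ p := rfl

@[simp] theorem eval_append (σ : κ → F) (p p' : IntPoly κ) :
    eval σ (p ++ p') = eval σ p + eval σ p' := by
  simp [eval]

theorem eval_map_mul (σ : κ → F) (t : IntTerm κ) (p : IntPoly κ) :
    eval σ (p.map t.mul) = t.eval σ * eval σ p := by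
  induction p with
  | nil => simp
  | cons s p ih => rw [List.map_cons, eval_cons, eval_cons, ih, IntTerm.eval_mul, mul_add]

/-- The variable `w` does not occur in `p`, not even in terms that would cancel. -/
def Avoids (w : κ) (p : IntPoly κ) : Prop := ∀ t ∈ p, w ∉ t.vars

variable [DecidableEq κ]

instance (w : κ) : DecidablePred (Avoids w) := fun p =>
  inferInstanceAs (Decidable (∀ t ∈ p, w ∉ t.vars))

theorem Avoids.eval_update {w : κ} {p : IntPoly κ} (hp : p.Avoids w) (σ : κ → F) (a : F) :
    p.eval (update σ w a) = p.eval σ := by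
  unfold eval IntTerm.eval
  congr 1
  refine List.map_congr_left fun t ht => ?_
  congr 2
  exact List.map_congr_left fun u hu => update_of_ne (ne_of_mem_of_not_mem hu (hp t ht)) _ _

/-- Adds the term `t` to `p`, merging it with a term in the same variables if there is one. -/
def insertTerm (t : IntTerm κ) : IntPoly κ → IntPoly κ
  | [] => [t]
  | s :: p =>
    if t.vars.isPerm s.vars then
      if t.coeff + s.coeff = 0 then p else ⟨t.coeff + s.coeff, s.vars⟩ :: p
    else s :: insertTerm t p

theorem eval_insertTerm (σ : κ → F) (t : IntTerm κ) (p : IntPoly κ) :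
    eval σ (insertTerm t p) = t.eval σ + eval σ p := by
  induction p with
  | nil => rfl
  | cons s p ih =>
    rw [insertTerm]
    split_ifs with hperm hzero
    · have hprod := ((List.isPerm_iff.mp hperm).map σ).prod_eq
      have hcoeff : (t.coeff + s.coeff : F) = 0 := by
        exact_mod_cast congrArg (Int.cast : ℤ → F) hzero
      simp only [eval_cons, IntTerm.eval, hprod]
      linear_combination -(s.vars.map σ).prod * hcoeff
    · have hprod := ((List.isPerm_iff.mp hperm).map σ).prod_eq
      simp only [eval_cons, IntTerm.eval, hprod]
      push_cast
      ring
    · rw [eval_cons, ih, eval_cons]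
      ring

theorem Avoids.insertTerm {w : κ} {t : IntTerm κ} {p : IntPoly κ} (ht : w ∉ t.vars)
    (hp : p.Avoids w) : (insertTerm t p).Avoids w := by
  induction p with
  | nil => simpa [IntPoly.insertTerm, Avoids] using ht
  | cons s p ih =>
    obtain ⟨hs, hp⟩ := List.forall_mem_cons.mp hp
    rw [IntPoly.insertTerm]
    split_ifs
    · exact hp
    · exact List.forall_mem_cons.mpr ⟨hs, hp⟩
    · exact List.forall_mem_cons.mpr ⟨hs, ih hp⟩

/-- Merges the terms of `p` that agree up to the order of their variables. -/
def collect (p : IntPoly κ) : IntPoly κ := p.foldr insertTerm []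

theorem eval_collect (σ : κ → F) (p : IntPoly κ) : eval σ (collect p) = eval σ p := by
  induction p with
  | nil => rfl
  | cons t p ih => exact (eval_insertTerm σ t _).trans (congrArg (t.eval σ + ·) ih)

theorem Avoids.collect {w : κ} {p : IntPoly κ} (hp : p.Avoids w) : (collect p).Avoids w := by
  induction p with
  | nil => exact hp
  | cons t p ih =>
    obtain ⟨ht, hp⟩ := List.forall_mem_cons.mp hp
    exact (ih hp).insertTerm ht

/-- The polynomial obtained from `p` by setting `w = 0`. -/
def dropVar (w : κ) (p : IntPoly κ) : IntPoly κ := p.filter fun t => w ∉ t.vars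

theorem avoids_dropVar (w : κ) (p : IntPoly κ) : (dropVar w p).Avoids w := fun _ ht =>
  of_decide_eq_true (List.mem_filter.mp ht).2

theorem eval_dropVar {σ : κ → F} {w : κ} (hw : σ w = 0) (p : IntPoly κ) :
    eval σ (dropVar w p) = eval σ p := by
  induction p with
  | nil => rfl
  | cons t p ih =>
    rw [dropVar] at ih ⊢
    by_cases ht : w ∈ t.vars
    · have hprod : (t.vars.map σ).prod = 0 := List.prod_eq_zero (hw ▸ List.mem_map_of_mem ht)
      rw [List.filter_cons_of_neg (by simpa using ht), ih, eval_cons, IntTerm.eval, hprod, mul_zero,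
        zero_add]
    · rw [List.filter_cons_of_pos (by simpa using ht), eval_cons, eval_cons, ih]

/-- The polynomial `p` with `w` eliminated by means of `a * w + b = 0`. To stay free of division `p`
is first multiplied by `a`, and one factor `a * w` of each term is replaced by `-b`; this removes
`w` entirely only if it has degree at most one in `p`. -/
def eliminate (w : κ) (a : IntTerm κ) (b p : IntPoly κ) : IntPoly κ :=
  if p.Avoids w then p else
    collect <| p.flatMap fun t =>
      if w ∈ t.vars then b.map (IntTerm.mul ⟨-t.coeff, t.vars.erase w⟩) else [a.mul t]

theorem eval_eliminate_eq_zero_iff [NoZeroDivisors F] {σ : κ → F} {w : κ} {a : IntTerm κ}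
    {b : IntPoly κ} (ha : a.eval σ ≠ 0) (hw : a.eval σ * σ w + b.eval σ = 0) (p : IntPoly κ) :
    (eliminate w a b p).eval σ = 0 ↔ p.eval σ = 0 := by
  rw [eliminate]
  split_ifs with hp
  · rfl
  suffices h : eval σ (p.flatMap fun t =>
      if w ∈ t.vars then b.map (IntTerm.mul ⟨-t.coeff, t.vars.erase w⟩) else [a.mul t]) =
      a.eval σ * p.eval σ by
    rw [eval_collect, h, mul_eq_zero, or_iff_right ha]
  clear hp
  induction p with
  | nil => simp
  | cons t p ih =>
    rw [List.flatMap_cons, eval_append, ih, eval_cons, mul_add]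
    congr 1
    split_ifs with ht
    · have hterm : t.eval σ = t.coeff * (σ w * ((t.vars.erase w).map σ).prod) := by
        rw [List.prod_map_erase σ ht, IntTerm.eval]
      rw [eval_map_mul, hterm, IntTerm.eval]
      push_cast
      linear_combination -t.coeff * ((t.vars.erase w).map σ).prod * hw
    · rw [eval_cons, eval_nil, add_zero, IntTerm.eval_mul]

theorem avoids_eliminate {w : κ} {a : IntTerm κ} {b p : IntPoly κ} (ha : w ∉ a.vars)
    (hb : b.Avoids w) (hp : ∀ t ∈ p, t.vars.count w ≤ 1) : (eliminate w a b p).Avoids w := by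
  rw [eliminate]
  split_ifs with hpw
  · exact hpw
  refine Avoids.collect fun s hs => ?_
  obtain ⟨t, ht, hs⟩ := List.mem_flatMap.mp hs
  split_ifs at hs with hw
  · obtain ⟨s, hsb, rfl⟩ := List.mem_map.mp hs
    have herase : w ∉ t.vars.erase w := by
      rw [← List.count_pos_iff, List.count_erase_self]
      have := hp t ht
      omega
    simpa [IntTerm.mul] using ⟨herase, hb s hsb⟩
  · rw [List.mem_singleton.mp hs]
    simpa [IntTerm.mul] using ⟨ha, hw⟩

end IntPoly

end Eval

section Solutions

variable {F : Type*} [CommRing F]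

/-- `σ` is a zero of all polynomials in `eqs` whose coordinates in `U` are all nonzero. -/
def IsSolution (eqs : List (IntPoly κ)) (U : List κ) (σ : κ → F) : Prop :=
  (∀ u ∈ U, σ u ≠ 0) ∧ ∀ p ∈ eqs, p.eval σ = 0

instance [DecidableEq F] (eqs : List (IntPoly κ)) (U : List κ) :
    DecidablePred (IsSolution (F := F) eqs U) :=
  fun _ => inferInstanceAs (Decidable (_ ∧ _))

theorem IsSolution.update_iff [DecidableEq κ] {eqs : List (IntPoly κ)} {U : List κ} {w : κ}
    (hU : w ∉ U) (heqs : ∀ p ∈ eqs, p.Avoids w) (σ : κ → F) (a : F) :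
    IsSolution eqs U (update σ w a) ↔ IsSolution eqs U σ := by
  refine and_congr (forall₂_congr fun u hu => ?_) (forall₂_congr fun p hp => ?_)
  · rw [update_of_ne (ne_of_mem_of_not_mem hu hU)]
  · rw [(heqs p hp).eval_update]

theorem isSolution_dropVar_iff [DecidableEq κ] (eqs : List (IntPoly κ)) (U : List κ) {w : κ}
    {σ : κ → F} (hσ : σ w = 0) :
    IsSolution (eqs.map (IntPoly.dropVar w)) U σ ↔ IsSolution eqs U σ := by
  simp only [IsSolution, List.forall_mem_map, IntPoly.eval_dropVar hσ]

theorem isSolution_cons_iff (eqs : List (IntPoly κ)) (U : List κ) (w : κ) (σ : κ → F) :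
    IsSolution eqs (w :: U) σ ↔ IsSolution eqs U σ ∧ σ w ≠ 0 := by
  rw [IsSolution, List.forall_mem_cons, IsSolution, and_assoc, and_rotate, ← and_assoc]

variable (F) in
/-- The number of solutions over `F` of the system `eqs` with nonzero coordinates in `U`. -/
def solutionCount [Fintype κ] [DecidableEq κ] [Fintype F] [DecidableEq F] (eqs : List (IntPoly κ))
    (U : List κ) : ℕ :=
  #{σ : κ → F | IsSolution eqs U σ}

variable [Fintype κ] [DecidableEq κ] [Fintype F] [DecidableEq F]

theorem solutionCount_of_all_isEmpty {eqs : List (IntPoly κ)} (heqs : eqs.all List.isEmpty)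
    {U : List κ} (hU : U.Nodup) :
    solutionCount F eqs U =
      (Fintype.card F - 1) ^ U.length * Fintype.card F ^ (Fintype.card κ - U.length) := by
  have htriv (σ : κ → F) : IsSolution eqs U σ ↔ ∀ u ∈ U, σ u ≠ 0 :=
    and_iff_left fun p hp => by
      rw [List.isEmpty_iff.mp (List.all_eq_true.mp heqs p hp), IntPoly.eval_nil]
  simp only [solutionCount, htriv]
  exact card_forall_mem_ne_zero hU

theorem card_mul_solutionCount_eq_add (eqs : List (IntPoly κ)) {U : List κ} {w : κ} (hw : w ∉ U) :
    Fintype.card F * solutionCount F eqs U =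
      solutionCount F (eqs.map (IntPoly.dropVar w)) U +
        Fintype.card F * solutionCount F eqs (w :: U) := by
  have hzero : Fintype.card F * #{σ : κ → F | IsSolution eqs U σ ∧ σ w = 0} =
      solutionCount F (eqs.map (IntPoly.dropVar w)) U := by
    rw [solutionCount, ← card_mul_card_graph (w := w) (g := 0) (fun _ _ => rfl)
      (IsSolution.update_iff hw (List.forall_mem_map.mpr fun p _ => p.avoids_dropVar w))]
    congr 2
    ext σ
    simp +contextual [isSolution_dropVar_iff]
  have hne : #{σ : κ → F | IsSolution eqs U σ ∧ σ w ≠ 0} = solutionCount F eqs (w :: U) := by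
    simp only [solutionCount, isSolution_cons_iff]
  rw [← hzero, ← hne, ← mul_add, solutionCount,
    ← card_filter_add_card_filter_not (p := fun σ : κ → F => σ w = 0), filter_filter, filter_filter]

end Solutions

/-- A choice of a variable in a term of an equation, to be solved for that variable. -/
structure Pivot (κ : Type*) where
  poly : IntPoly κ
  term : IntTerm κ
  var : κ

namespace Pivot

/-- All pivots of a system of equations. -/
def candidates (eqs : List (IntPoly κ)) : List (Pivot κ) :=
  eqs.flatMap fun p => p.flatMap fun t => t.vars.map (⟨p, t, ·⟩)

theorem mem_candidates {eqs : List (IntPoly κ)} {c : Pivot κ} :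
    c ∈ candidates eqs ↔ c.poly ∈ eqs ∧ c.term ∈ c.poly ∧ c.var ∈ c.term.vars := by
  cases c
  simp only [candidates, List.mem_flatMap, List.mem_map, mk.injEq]
  aesop

variable [DecidableEq κ]

/-- The coefficient `a` in the equation of the pivot, written as `a * w + b = 0` with `w` its
variable. -/
def lead (c : Pivot κ) : IntTerm κ := ⟨c.term.coeff, c.term.vars.erase c.var⟩

/-- The remainder `b` in the equation of the pivot, written as `a * w + b = 0` with `w` its
variable. -/
def rest (c : Pivot κ) : IntPoly κ := c.poly.erase c.term

/-- Eliminates the variable of the pivot `c` from `p` by means of the equation of `c`. -/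
def eliminate (c : Pivot κ) (p : IntPoly κ) : IntPoly κ :=
  IntPoly.eliminate c.var c.lead c.rest p

/-- Solving the pivot equation `a * w + b = 0` for `w` is possible on all of `U`: the coefficient
`a` is invertible, `w` can be eliminated from the other equations, and if `w` has to be nonzero
then `b` is a single invertible term, which makes the condition `w ≠ 0` automatic. -/
def Admissible (eqs : List (IntPoly κ)) (U : List κ) (c : Pivot κ) : Prop :=
  c.lead.IsUnitOn (U.filter (· ≠ c.var)) ∧ c.rest.Avoids c.var ∧
    (∀ p ∈ eqs.erase c.poly, ∀ t ∈ p, t.vars.count c.var ≤ 1) ∧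
    (c.var ∈ U → c.rest.length = 1 ∧ ∀ t ∈ c.rest, t.IsUnitOn U)

instance (eqs : List (IntPoly κ)) (U : List κ) : DecidablePred (Admissible eqs U) :=
  fun _ => inferInstanceAs (Decidable (_ ∧ _ ∧ _ ∧ _))

variable {F : Type*} [Field F] {eqs : List (IntPoly κ)} {U : List κ} {c : Pivot κ}

theorem eval_poly (hc : c ∈ candidates eqs) (σ : κ → F) :
    c.poly.eval σ = c.lead.eval σ * σ c.var + c.rest.eval σ := by
  obtain ⟨-, hterm, hvar⟩ := mem_candidates.mp hc
  have hpoly : c.term.eval σ + c.rest.eval σ = c.poly.eval σ := List.sum_map_erase _ hterm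
  have hprod : σ c.var * (c.lead.vars.map σ).prod = (c.term.vars.map σ).prod :=
    List.prod_map_erase σ hvar
  rw [← hpoly, IntTerm.eval, IntTerm.eval, ← hprod, lead]
  ring

theorem Admissible.var_notMem_lead (hc : c.Admissible eqs U) : c.var ∉ c.lead.vars :=
  fun h => by simpa using hc.1.2 _ h

theorem Admissible.ne_zero_of_eq_zero (h2 : (2 : F) ≠ 0) (hc : c.Admissible eqs U)
    (hvar : c.var ∈ U) {σ : κ → F} (hσ : ∀ u ∈ U.filter (· ≠ c.var), σ u ≠ 0)
    (heq : c.lead.eval σ * σ c.var + c.rest.eval σ = 0) : σ c.var ≠ 0 := by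
  obtain ⟨-, havoid, -, hunit⟩ := hc
  obtain ⟨hlen, hrest⟩ := hunit hvar
  obtain ⟨t, ht⟩ := List.length_eq_one_iff.mp hlen
  have hmem : t ∈ c.rest := by rw [ht]; exact List.mem_singleton_self t
  have ht_unit : t.IsUnitOn (U.filter (· ≠ c.var)) := by
    refine ⟨(hrest t hmem).1, fun u hu => List.mem_filter.mpr ⟨(hrest t hmem).2 u hu, ?_⟩⟩
    exact decide_eq_true (ne_of_mem_of_not_mem hu (havoid t hmem))
  intro h0
  rw [h0, mul_zero, zero_add, ht, IntPoly.eval_cons, IntPoly.eval_nil, add_zero] at heq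
  exact ht_unit.eval_ne_zero h2 hσ heq

theorem Admissible.isSolution_iff (h2 : (2 : F) ≠ 0) (hmem : c ∈ candidates eqs)
    (hc : c.Admissible eqs U) (σ : κ → F) :
    IsSolution eqs U σ ↔
      IsSolution ((eqs.erase c.poly).map c.eliminate) (U.filter (· ≠ c.var)) σ ∧
        σ c.var = -c.rest.eval σ / c.lead.eval σ := by
  have hU : (∀ u ∈ U, σ u ≠ 0) ↔
      (∀ u ∈ U.filter (· ≠ c.var), σ u ≠ 0) ∧ (c.var ∈ U → σ c.var ≠ 0) := by
    simp only [List.mem_filter, decide_eq_true_eq]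
    exact ⟨fun h => ⟨fun u hu => h u hu.1, h _⟩, fun h u hu =>
      if huw : u = c.var then huw ▸ h.2 (huw ▸ hu) else h.1 u ⟨hu, huw⟩⟩
  have heqs : (∀ p ∈ eqs, p.eval σ = 0) ↔
      c.poly.eval σ = 0 ∧ ∀ p ∈ eqs.erase c.poly, p.eval σ = 0 := by
    simp only [(List.perm_cons_erase (mem_candidates.mp hmem).1).mem_iff, List.mem_cons,
      forall_eq_or_imp]
  rw [IsSolution, IsSolution, hU, heqs, List.forall_mem_map, eval_poly hmem, and_assoc, and_assoc]
  refine and_congr_right fun hσ => ?_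
  have hlead := hc.1.eval_ne_zero h2 hσ
  have hgraph : σ c.var = -c.rest.eval σ / c.lead.eval σ ↔
      c.lead.eval σ * σ c.var + c.rest.eval σ = 0 := by
    rw [eq_div_iff hlead, mul_comm, eq_neg_iff_add_eq_zero]
  rw [hgraph, and_comm (b := _ = _), ← and_assoc, and_comm (b := _ = _), and_assoc]
  refine and_congr_right fun heq => ?_
  rw [and_iff_right fun hvar => hc.ne_zero_of_eq_zero h2 hvar hσ heq]
  exact forall₂_congr fun p _ => (IntPoly.eval_eliminate_eq_zero_iff hlead heq p).symm

theorem Admissible.card_mul_solutionCount [Fintype F] [DecidableEq F] [Fintype κ]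
    (h2 : (2 : F) ≠ 0) (hmem : c ∈ candidates eqs) (hc : c.Admissible eqs U) :
    Fintype.card F * solutionCount F eqs U =
      solutionCount F ((eqs.erase c.poly).map c.eliminate) (U.filter (· ≠ c.var)) := by
  have hlead (σ : κ → F) (a : F) : c.lead.eval (update σ c.var a) = c.lead.eval σ := by
    simpa using IntPoly.Avoids.eval_update (p := [c.lead])
      (List.forall_mem_singleton.mpr hc.var_notMem_lead) σ a
  have havoids : ∀ p ∈ (eqs.erase c.poly).map c.eliminate, p.Avoids c.var :=
    List.forall_mem_map.mpr fun p hp =>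
      IntPoly.avoids_eliminate hc.var_notMem_lead hc.2.1 (hc.2.2.1 p hp)
  simp only [solutionCount, hc.isSolution_iff h2 hmem]
  exact card_mul_card_graph (fun σ a => by rw [hc.2.1.eval_update, hlead])
    (IsSolution.update_iff (by simp) havoids)

end Pivot

/-- The coefficients of `v ^ k * (v + 1) ^ (d - k)`, the number of points in a `d`-dimensional space
with `k` prescribed nonzero coordinates, divided by `(v + 1) ^ r`. -/
def leafCoeffs (d k r : ℕ) : Option (List ℕ) :=
  if k + r ≤ d then some (powMulSuccPowCoeffs k (d - (k + r))) else none

theorem leafCoeffs_sound {d k r : ℕ} {P : List ℕ} (h : leafCoeffs d k r = some P) (v : ℕ) :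
    v ^ k * (v + 1) ^ (d - k) = (v + 1) ^ r * Nat.ofDigits v P := by
  obtain ⟨hle, hP⟩ := Option.ite_none_right_eq_some.mp h
  rw [← Option.some.inj hP, ofDigits_powMulSuccPowCoeffs, mul_left_comm, ← pow_add]
  congr 2
  omega

section Solver

variable [DecidableEq κ]

/-- An algorithm for `solutionCount`: the result `some P` says that the number of solutions in `d`
variables is `(v + 1) ^ r * Nat.ofDigits v P` over every field with `v + 1` elements, `v + 1` odd.
It solves for an admissible pivot if there is one, and otherwise branches on whether a variable
satisfying `splittable` vanishes; `fuel` bounds the depth of the recursion. -/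
def solve (d : ℕ) (splittable : κ → Bool) :
    ℕ → List (IntPoly κ) → List κ → ℕ → Option (List ℕ)
  | 0, _, _, _ => none
  | fuel + 1, eqs, U, r =>
    if eqs.all List.isEmpty then leafCoeffs d U.length r
    else match (Pivot.candidates eqs).reverse.find? (Pivot.Admissible eqs U ·) with
      | some c => solve d splittable fuel ((eqs.erase c.poly).map c.eliminate)
          (U.filter (· ≠ c.var)) (r + 1)
      | none =>
        match (eqs.flatten.flatMap IntTerm.vars).find? (fun w => w ∉ U && splittable w) with
        | some w => Option.map₂ addCoeffs
            (solve d splittable fuel (eqs.map (IntPoly.dropVar w)) U (r + 1))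
            (solve d splittable fuel eqs (w :: U) r)
        | none => none

theorem solutionCount_of_solve {F : Type*} [Field F] [Fintype F] [DecidableEq F] [Fintype κ]
    (h2 : (2 : F) ≠ 0) {v d : ℕ} (hv : Fintype.card F = v + 1) (hd : Fintype.card κ = d)
    {splittable : κ → Bool} {fuel r : ℕ} {eqs : List (IntPoly κ)} {U : List κ} (hU : U.Nodup)
    {P : List ℕ} (hP : solve d splittable fuel eqs U r = some P) :
    solutionCount F eqs U = (v + 1) ^ r * Nat.ofDigits v P := by
  induction fuel generalizing eqs U r P with
  | zero => simp [solve] at hP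
  | succ fuel ih =>
    rw [solve] at hP
    split_ifs at hP with hempty
    · rw [solutionCount_of_all_isEmpty hempty hU, hv, hd, Nat.add_sub_cancel, leafCoeffs_sound hP]
    apply Nat.eq_of_mul_eq_mul_left (Nat.add_one_pos v)
    split at hP
    case h_1 c hc =>
      have hmem := List.mem_reverse.mp (List.mem_of_find?_eq_some hc)
      have hadm : c.Admissible eqs U := by simpa using List.find?_some hc
      rw [← hv, hadm.card_mul_solutionCount h2 hmem, ih (hU.filter _) hP, hv]
      ring
    case h_2 =>
      split at hP
      case h_1 w hw =>
        have hwU : w ∉ U := (by simpa using List.find?_some hw : w ∉ U ∧ splittable w).1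
        obtain ⟨P₀, P₁, hP₀, hP₁, rfl⟩ := Option.map₂_eq_some_iff.mp hP
        rw [← hv, card_mul_solutionCount_eq_add _ hwU, ih hU hP₀,
          ih (List.nodup_cons.mpr ⟨hwU, hU⟩) hP₁, ofDigits_addCoeffs, hv]
        ring
      case h_2 => cases hP

end Solver

end PolynomialSystems

section Truncation

variable {ι F : Type*} [CommRing F]

variable [DecidableEq ι] {S : List ι}

/-- The projection of `ι → F` that replaces the coordinates in `S` by zero. -/
def zeroOut (S : List ι) : (ι → F) →ₗ[F] (ι → F) where
  toFun x i := if i ∈ S then 0 else x i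
  map_add' x y := by ext i; by_cases hi : i ∈ S <;> simp [hi]
  map_smul' a x := by ext i; by_cases hi : i ∈ S <;> simp [hi]

theorem zeroOut_apply (S : List ι) (x : ι → F) (i : ι) :
    zeroOut S x i = if i ∈ S then 0 else x i :=
  rfl

theorem zeroOut_zeroOut (S : List ι) (x : ι → F) : zeroOut S (zeroOut S x) = zeroOut S x := by
  ext i
  by_cases hi : i ∈ S <;> simp [zeroOut_apply, hi]

theorem zeroOut_update {w : ι} (hw : w ∈ S) (x : ι → F) (a : F) :
    zeroOut S (update x w a) = zeroOut S x := by
  ext i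
  by_cases hi : i ∈ S
  · simp only [zeroOut_apply, if_pos hi]
  · simp only [zeroOut_apply, if_neg hi, update_of_ne (ne_of_mem_of_not_mem hw hi).symm]

theorem dotProduct_zeroOut [Fintype ι] (f x : ι → F) :
    f ⬝ᵥ zeroOut S x = zeroOut S f ⬝ᵥ x := by
  refine sum_congr rfl fun i _ => ?_
  by_cases hi : i ∈ S <;> simp [zeroOut_apply, hi]

theorem zeroOut_singleton_add (i : ι) (x : ι → F) :
    zeroOut [i] x + Pi.single i (x i) = x := by
  ext j
  by_cases hj : j = i
  · subst hj; simp [zeroOut_apply]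
  · simp [zeroOut_apply, hj]

theorem zeroOut_pair_add {i j : ι} (hij : i ≠ j) (x : ι → F) :
    zeroOut [i, j] x + Pi.single i (x i) + Pi.single j (x j) = x := by
  ext k
  by_cases hki : k = i
  · subst hki; simp [zeroOut_apply, hij]
  · by_cases hkj : k = j
    · subst hkj; simp [zeroOut_apply, hij.symm]
    · simp [zeroOut_apply, hki, hkj]

theorem zeroOut_single (S : List ι) (i : ι) (a : F) :
    zeroOut S (Pi.single i a) = Pi.single i (if i ∈ S then 0 else a) := by
  ext j
  by_cases hj : j = i
  · subst hj; simp [zeroOut_apply]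
  · simp [zeroOut_apply, hj]

variable (b : (ι → F) →ₗ[F] (ι → F) →ₗ[F] (ι → F))

/-- The bracket `b` with the coordinates in `S` deleted from its arguments and its value. Keeping
the index type `ι` fixed makes the deleted coordinates central and unconstrained, so that they
only contribute powers of the cardinality of `F`. -/
def truncate (S : List ι) : (ι → F) →ₗ[F] (ι → F) →ₗ[F] (ι → F) :=
  (b.compl₁₂ (zeroOut S) (zeroOut S)).compr₂ (zeroOut S)

theorem truncate_apply (S : List ι) (x y : ι → F) :
    truncate b S x y = zeroOut S (b (zeroOut S x) (zeroOut S y)) :=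
  rfl

variable {b} in
theorem dotProduct_truncate [Fintype ι] (f x y : ι → F) (S : List ι) :
    f ⬝ᵥ truncate b S x y = zeroOut S f ⬝ᵥ b (zeroOut S x) (zeroOut S y) := by
  rw [truncate_apply, dotProduct_zeroOut]

end Truncation

section Radical

variable {ι F : Type*} [Field F] (b : (ι → F) →ₗ[F] (ι → F) →ₗ[F] (ι → F))

/-- The exponential of `b u`, truncated after the quadratic term. -/
def expAd (u : ι → F) : (ι → F) →ₗ[F] (ι → F) :=
  LinearMap.id + b u + (2⁻¹ : F) • (b u ∘ₗ b u)

theorem expAd_apply (u x : ι → F) : expAd b u x = x + b u x + (2⁻¹ : F) • b u (b u x) :=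
  rfl

/-- An anticommutative bracket for which `exp (ad u)` is an automorphism for every multiple `u` of a
coordinate vector, with `ad u` nilpotent of order three. This substitute for the Jacobi identity is
all that the counting below needs, and it passes to subquotients. -/
structure HasExpAd [DecidableEq ι] : Prop where
  anticomm (x y : ι → F) : b x y = -b y x
  ad_cube (i : ι) (t : F) (x : ι → F) :
    b (Pi.single i t) (b (Pi.single i t) (b (Pi.single i t) x)) = 0
  expAd_map (i : ι) (t : F) (x y : ι → F) :
    expAd b (Pi.single i t) (b x y) = b (expAd b (Pi.single i t) x) (expAd b (Pi.single i t) y)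

variable {b}

theorem expAd_neg_expAd (h2 : (2 : F) ≠ 0) {u : ι → F} (hu : ∀ x, b u (b u (b u x)) = 0)
    (x : ι → F) : expAd b (-u) (expAd b u x) = x := by
  simp only [expAd_apply, map_add, map_neg, LinearMap.neg_apply, map_smul, hu,
    map_zero]
  ext i
  simp only [Pi.add_apply, Pi.neg_apply, Pi.smul_apply, smul_eq_mul, Pi.zero_apply]
  field_simp
  ring

namespace HasExpAd

variable [DecidableEq ι]

/-- `expAd b (Pi.single i t)` as a permutation, with inverse `expAd b (Pi.single i (-t))`. -/
def expAdEquiv (h2 : (2 : F) ≠ 0) (hb : HasExpAd b) (i : ι) (t : F) : (ι → F) ≃ (ι → F) where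
  toFun := expAd b (Pi.single i t)
  invFun := expAd b (Pi.single i (-t))
  left_inv x := by
    rw [Pi.single_neg]
    exact expAd_neg_expAd h2 (hb.ad_cube i t) x
  right_inv x := by
    have := expAd_neg_expAd h2 (hb.ad_cube i (-t)) x
    rwa [← Pi.single_neg, neg_neg] at this

theorem expAdEquiv_apply (h2 : (2 : F) ≠ 0) (hb : HasExpAd b) (i : ι) (t : F) (x : ι → F) :
    hb.expAdEquiv h2 i t x = expAd b (Pi.single i t) x :=
  rfl

/-- Here `truncate b S` is, up to extension by zero, the bracket of the quotient of `H` by a central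
subspace. -/
theorem truncate_of_subalgebra {S : List ι} (hb : HasExpAd b) {H : Submodule F (ι → F)}
    (hmem : ∀ x ∈ H, ∀ y ∈ H, b x y ∈ H) (hS : ∀ x, zeroOut S x ∈ H)
    (hker : ∀ x ∈ H, ∀ y ∈ H, b x (zeroOut S y) = b x y) : HasExpAd (truncate b S) where
  anticomm x y := by rw [truncate_apply, hb.anticomm, map_neg, truncate_apply]
  ad_cube i t x := by
    have hsingle := zeroOut_single S i t ▸ hS (Pi.single i t)
    simp only [truncate_apply, zeroOut_single, zeroOut_zeroOut]
    have hx := hmem _ hsingle _ (hS x)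
    rw [hker _ hsingle _ hx, hker _ hsingle _ (hmem _ hsingle _ hx), hb.ad_cube, map_zero]
  expAd_map i t x y := by
    set u : ι → F := Pi.single i (if i ∈ S then 0 else t) with hu
    have huH : u ∈ H := by simpa only [hu, zeroOut_single] using hS (Pi.single i t)
    have hker' (x) (hx : x ∈ H) (y) (hy : y ∈ H) : b (zeroOut S x) (zeroOut S y) = b x y := by
      rw [hker _ (hS x) _ hy, hb.anticomm, hker _ hy _ hx, hb.anticomm x]
    have hexp_mem {x} (hx : x ∈ H) : expAd b u x ∈ H := H.add_mem (H.add_mem hx (hmem _ huH _ hx))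
      (H.smul_mem _ (hmem _ huH _ (hmem _ huH _ hx)))
    have hexp (x : ι → F) : expAd (truncate b S) (Pi.single i t) x =
        x - zeroOut S x + zeroOut S (expAd b u (zeroOut S x)) := by
      simp only [expAd_apply, truncate_apply, zeroOut_single, zeroOut_zeroOut, ← hu, map_add,
        map_smul]
      rw [hker _ huH _ (hmem _ huH _ (hS x))]
      abel
    have hexp_zeroOut (x : ι → F) : zeroOut S (expAd (truncate b S) (Pi.single i t) x) =
        zeroOut S (expAd b u (zeroOut S x)) := by
      rw [hexp, map_add, map_sub, zeroOut_zeroOut, zeroOut_zeroOut, sub_self, zero_add]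
    have hexp_ker {x} (hx : x ∈ H) : zeroOut S (expAd b u (zeroOut S x)) =
        zeroOut S (expAd b u x) := by
      simp only [expAd_apply, map_add, zeroOut_zeroOut, hker _ huH _ hx]
    rw [truncate_apply b S x y, truncate_apply, hexp_zeroOut, hexp_zeroOut,
      hker' _ (hexp_mem (hS x)) _ (hexp_mem (hS y)), ← hb.expAd_map, hexp, zeroOut_zeroOut,
      sub_self, zero_add, hexp_ker (hmem _ (hS x) _ (hS y))]

end HasExpAd

section Linear

variable [DecidableEq ι]

theorem forall_mem_update_ne_zero_iff {Z : List ι} {w : ι} (hw : w ∉ Z) (f : ι → F) (a : F) :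
    (∀ z ∈ Z, update f w a z ≠ 0) ↔ ∀ z ∈ Z, f z ≠ 0 :=
  forall₂_congr fun z hz => by rw [update_of_ne (ne_of_mem_of_not_mem hz hw)]

theorem bilin_apply_single (b : (ι → F) →ₗ[F] (ι → F) →ₗ[F] (ι → F)) (x : ι → F) (i : ι) (a : F) :
    b x (Pi.single i a) = a • b x (Pi.single i 1) := by
  rw [← map_smul, ← Pi.single_smul, smul_eq_mul, mul_one]

theorem zeroOut_singleton_of_central {g : ι} (hb : ∀ x y, b x y = -b y x)
    (hg : ∀ x, b x (Pi.single g 1) = 0) (x y : ι → F) :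
    b (zeroOut [g] x) (zeroOut [g] y) = b x y := by
  have hsingle (a : F) (x : ι → F) : b x (Pi.single g a) = 0 := by
    rw [← mul_one a, ← smul_eq_mul, Pi.single_smul, map_smul, hg, smul_zero]
  have hright (x y : ι → F) : b x (zeroOut [g] y) = b x y := by
    conv_rhs => rw [← zeroOut_singleton_add g y, map_add, hsingle, add_zero]
  rw [hright, hb, hright, ← hb]

theorem HasExpAd.truncate_singleton {g : ι} (hb : HasExpAd b) (hg : ∀ x, b x (Pi.single g 1) = 0) :
    HasExpAd (truncate b [g]) :=
  hb.truncate_of_subalgebra (H := ⊤) (by simp) (by simp) fun x _ y _ => by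
    rw [← zeroOut_singleton_of_central hb.anticomm hg, zeroOut_zeroOut,
      zeroOut_singleton_of_central hb.anticomm hg]

variable (b) in
/-- The coordinate vectors `e_α`, `e_β` span a Heisenberg algebra with `e_γ`, where `γ` is one of
the coordinates `Z` required to be nonzero: `[x, e_β] = c * x_α * e_γ` for all `x`, while
`x_α = 0` defines an ideal and `e_α` commutes with `e_z` for `z ∈ Z`. -/
structure IsArm (Z : List ι) (α β γ : ι) (c : F) : Prop where
  coeff_ne_zero : c ≠ 0
  target_mem : γ ∈ Z
  left_notMem : α ∉ Z
  apply_single_right (x : ι → F) : b x (Pi.single β 1) = Pi.single γ (c * x α)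
  apply_left_eq_zero (x y : ι → F) : b x y α = 0
  apply_single_mem : ∀ z ∈ Z, b (Pi.single α 1) (Pi.single z 1) = 0

end Linear

namespace IsArm

variable [DecidableEq ι] {Z : List ι} {α β γ : ι} {c : F}

theorem right_notMem (h : IsArm b Z α β γ c) : β ∉ Z := fun hβ => by
  have := congrFun ((h.apply_single_right _).symm.trans (h.apply_single_mem β hβ)) γ
  simp [h.coeff_ne_zero] at this

theorem left_ne_right (h2 : (2 : F) ≠ 0) (hb : HasExpAd b) (h : IsArm b Z α β γ c) : α ≠ β := by
  rintro rfl
  have hself := congrFun (hb.anticomm (Pi.single α 1) (Pi.single α 1)) γ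
  rw [h.apply_single_right, Pi.neg_apply, Pi.single_eq_same, Pi.single_eq_same, mul_one,
    eq_neg_iff_add_eq_zero, ← two_mul] at hself
  exact mul_ne_zero h2 h.coeff_ne_zero hself

theorem apply_single_right_eq_zero (hb : HasExpAd b) (h : IsArm b Z α β γ c) {x : ι → F}
    (hx : x α = 0) (a : F) : b x (Pi.single β a) = 0 ∧ b (Pi.single β a) x = 0 := by
  have hzero : b x (Pi.single β a) = 0 := by
    rw [bilin_apply_single, h.apply_single_right, hx, mul_zero, Pi.single_zero, smul_zero]
  exact ⟨hzero, by rw [hb.anticomm, hzero, neg_zero]⟩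

theorem zeroOut_pair_add_single (h2 : (2 : F) ≠ 0) (hb : HasExpAd b) (h : IsArm b Z α β γ c)
    {x : ι → F} (hx : x α = 0) : zeroOut [α, β] x + Pi.single β (x β) = x := by
  simpa [hx] using zeroOut_pair_add (h.left_ne_right h2 hb) x

theorem zeroOut_apply_left (α β : ι) (x : ι → F) : zeroOut [α, β] x α = 0 := by
  simp [zeroOut_apply]

theorem hasExpAd_truncate (h2 : (2 : F) ≠ 0) (hb : HasExpAd b) (h : IsArm b Z α β γ c) :
    HasExpAd (truncate b [α, β]) := by
  refine hb.truncate_of_subalgebra (H := LinearMap.ker (LinearMap.proj α)) (fun x _ y _ => ?_)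
    (fun x => ?_) fun x hx y hy => ?_
  · exact h.apply_left_eq_zero x y
  · exact zeroOut_apply_left α β x
  · conv_rhs => rw [← h.zeroOut_pair_add_single h2 hb hy, map_add,
      (h.apply_single_right_eq_zero hb hx _).1, add_zero]

theorem expAd_single_mem (hb : HasExpAd b) (h : IsArm b Z α β γ c) (t : F) {z : ι} (hz : z ∈ Z) :
    expAd b (Pi.single α t) (Pi.single z 1) = Pi.single z 1 := by
  have hbz : b (Pi.single α t) (Pi.single z 1) = 0 := by
    rw [hb.anticomm, bilin_apply_single, hb.anticomm, h.apply_single_mem z hz, neg_zero, smul_zero,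
      neg_zero]
  rw [expAd_apply, hbz, map_zero, smul_zero, add_zero, add_zero]

end IsArm

section DotProduct

variable [Fintype ι] [DecidableEq ι]

namespace IsArm

variable {Z : List ι} {α β γ : ι} {c : F}

theorem dotProduct_apply (h2 : (2 : F) ≠ 0) (hb : HasExpAd b) (h : IsArm b Z α β γ c)
    {f x : ι → F} (hf : f β = 0) (hx : x α = 0) (y : ι → F) :
    f ⬝ᵥ b x y = f ⬝ᵥ truncate b [α, β] x y +
      y α * (f ⬝ᵥ b (zeroOut [α, β] x) (Pi.single α 1) - c * f γ * x β) := by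
  have htrunc : f ⬝ᵥ truncate b [α, β] x y =
      f ⬝ᵥ b (zeroOut [α, β] x) (zeroOut [α, β] y) := by
    rw [truncate_apply, eq_comm]
    conv_lhs => rw [← zeroOut_pair_add (h.left_ne_right h2 hb) (b _ _)]
    simp [h.apply_left_eq_zero, hf]
  have hβα : b (Pi.single β (x β)) (Pi.single α 1) = -(x β • Pi.single γ c) := by
    rw [hb.anticomm, bilin_apply_single, h.apply_single_right, Pi.single_eq_same, mul_one]
  rw [htrunc]
  conv_lhs =>
    rw [← zeroOut_pair_add (h.left_ne_right h2 hb) y, map_add, map_add,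
      (h.apply_single_right_eq_zero hb hx _).1, bilin_apply_single,
      ← h.zeroOut_pair_add_single h2 hb hx]
  simp only [map_add, LinearMap.add_apply, hβα,
    (h.apply_single_right_eq_zero hb (zeroOut_apply_left α β y) _).2, dotProduct_add,
    dotProduct_smul, dotProduct_neg, dotProduct_zero, dotProduct_single, smul_eq_mul]
  ring

theorem forall_dotProduct_eq_zero_iff (h2 : (2 : F) ≠ 0) (hb : HasExpAd b)
    (h : IsArm b Z α β γ c) {f : ι → F} (hfβ : f β = 0) (hfγ : f γ ≠ 0) (x : ι → F) :
    (∀ y, f ⬝ᵥ b x y = 0) ↔ ((∀ y, f ⬝ᵥ truncate b [α, β] x y = 0) ∧ x α = 0) ∧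
      x β = f ⬝ᵥ b (zeroOut [α, β] x) (Pi.single α 1) / (c * f γ) := by
  have hcγ : c * f γ ≠ 0 := mul_ne_zero h.coeff_ne_zero hfγ
  rw [and_assoc, and_left_comm, eq_div_iff hcγ]
  constructor
  · intro hx
    have hxα : x α = 0 := by
      have := hx (Pi.single β 1)
      rw [h.apply_single_right, dotProduct_single] at this
      simpa [hfγ, h.coeff_ne_zero] using this
    have hleft := hx (Pi.single α 1)
    rw [h.dotProduct_apply h2 hb hfβ hxα, dotProduct_truncate, zeroOut_single] at hleft
    simp only [List.mem_cons, true_or, if_true, Pi.single_zero, map_zero, dotProduct_zero,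
      Pi.single_eq_same, one_mul, zero_add, sub_eq_zero] at hleft
    refine ⟨hxα, fun y => ?_, by rw [hleft]; ring⟩
    have hy := hx y
    rwa [h.dotProduct_apply h2 hb hfβ hxα, hleft, sub_self, mul_zero, add_zero] at hy
  · rintro ⟨hxα, htrunc, hxβ⟩ y
    rw [h.dotProduct_apply h2 hb hfβ hxα, htrunc, ← hxβ]
    ring

/-- The coadjoint action on `f` of `exp (ad (t * e_α))`, with `t` chosen so that the new `β`
coordinate is zero. -/
def straighten (b : (ι → F) →ₗ[F] (ι → F) →ₗ[F] (ι → F)) (α β γ : ι) (c : F) (f : ι → F) :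
    ι → F :=
  f ᵥ* LinearMap.toMatrix' (expAd b (Pi.single α (-f β / (c * f γ))))

theorem straighten_dotProduct (f x : ι → F) :
    straighten b α β γ c f ⬝ᵥ x = f ⬝ᵥ expAd b (Pi.single α (-f β / (c * f γ))) x := by
  rw [straighten, ← Matrix.dotProduct_mulVec, LinearMap.toMatrix'_mulVec]

theorem straighten_apply (f : ι → F) (i : ι) :
    straighten b α β γ c f i =
      f ⬝ᵥ expAd b (Pi.single α (-f β / (c * f γ))) (Pi.single i 1) := by
  rw [← straighten_dotProduct, dotProduct_single_one]

theorem straighten_apply_mem (hb : HasExpAd b) (h : IsArm b Z α β γ c) (f : ι → F) {z : ι}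
    (hz : z ∈ Z) : straighten b α β γ c f z = f z := by
  rw [straighten_apply, h.expAd_single_mem hb _ hz, dotProduct_single_one]

theorem straighten_apply_right (hb : HasExpAd b) (h : IsArm b Z α β γ c) {f : ι → F}
    (hf : f γ ≠ 0) : straighten b α β γ c f β = 0 := by
  have hγ (t a : F) : b (Pi.single α t) (Pi.single γ a) = 0 := by
    rw [bilin_apply_single, hb.anticomm, bilin_apply_single, hb.anticomm,
      h.apply_single_mem γ h.target_mem]
    simp
  have hc := h.coeff_ne_zero
  rw [straighten_apply, expAd_apply, h.apply_single_right, Pi.single_eq_same, hγ, smul_zero,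
    add_zero, dotProduct_add, dotProduct_single_one, dotProduct_single]
  field_simp
  ring

theorem straighten_injective (h2 : (2 : F) ≠ 0) (hb : HasExpAd b) {f f' : ι → F}
    (hβ : f β = f' β) (hγ : f γ = f' γ)
    (hs : straighten b α β γ c f = straighten b α β γ c f') : f = f' := by
  refine funext fun i => ?_
  obtain ⟨x, hx⟩ := (hb.expAdEquiv h2 α (-f β / (c * f γ))).surjective (Pi.single i 1)
  have hdot := congrArg (· ⬝ᵥ x) hs
  simp only [straighten_dotProduct, ← hβ, ← hγ] at hdot
  rw [← hb.expAdEquiv_apply h2, hx] at hdot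
  simpa using hdot

end IsArm

end DotProduct

section Count

variable [Fintype ι] [DecidableEq ι] [Fintype F] [DecidableEq F]

variable (b) in
/-- The cardinality of the radical of the form `(x, y) ↦ f [x, y]`. -/
def radicalCard (f : ι → F) : ℕ := #{x | ∀ y, f ⬝ᵥ b x y = 0}

variable (b) in
/-- The number of pairs `(f, x)` with `x` in the radical of `f` and `f_z ≠ 0` for all `z ∈ Z`. -/
def radicalPairCount (Z : List ι) : ℕ := ∑ f with ∀ z ∈ Z, f z ≠ 0, radicalCard b f

theorem radicalPairCount_eq_card (b : (ι → F) →ₗ[F] (ι → F) →ₗ[F] (ι → F)) (Z : List ι) :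
    radicalPairCount b Z =
      #{p : (ι → F) × (ι → F) | (∀ z ∈ Z, p.1 z ≠ 0) ∧ ∀ y, p.1 ⬝ᵥ b p.2 y = 0} := by
  simp only [radicalPairCount, radicalCard, card_filter, sum_filter, Fintype.sum_prod_type,
    ite_and, sum_ite_irrel, sum_const_zero]

theorem radicalCard_truncate_update {S : List ι} {w : ι} (hw : w ∈ S) (f : ι → F) (a : F) :
    radicalCard (truncate b S) (update f w a) = radicalCard (truncate b S) f := by
  simp only [radicalCard, dotProduct_truncate, zeroOut_update hw]

theorem radicalPairCount_zero {Z : List ι} (hZ : Z.Nodup) :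
    radicalPairCount (0 : (ι → F) →ₗ[F] (ι → F) →ₗ[F] (ι → F)) Z =
      (Fintype.card F - 1) ^ Z.length * Fintype.card F ^ (Fintype.card ι - Z.length) *
        Fintype.card F ^ Fintype.card ι := by
  have hcard (f : ι → F) : radicalCard (0 : (ι → F) →ₗ[F] (ι → F) →ₗ[F] (ι → F)) f =
      Fintype.card F ^ Fintype.card ι := by
    simp [radicalCard]
  simp only [radicalPairCount, hcard, sum_const, smul_eq_mul, card_forall_mem_ne_zero hZ]

theorem card_mul_radicalPairCount_eq_add {g : ι} (hb : ∀ x y, b x y = -b y x)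
    (hg : ∀ x, b x (Pi.single g 1) = 0) {Z : List ι} (hZ : g ∉ Z) :
    Fintype.card F * radicalPairCount b Z =
      radicalPairCount (truncate b [g]) Z + Fintype.card F * radicalPairCount b (g :: Z) := by
  have hcard {f : ι → F} (hf : f g = 0) : radicalCard b f = radicalCard (truncate b [g]) f := by
    have hf' : zeroOut [g] f = f := by simpa [hf] using zeroOut_singleton_add g f
    simp only [radicalCard, dotProduct_truncate, zeroOut_singleton_of_central hb hg, hf']
  have hzero : Fintype.card F * ∑ f with (∀ z ∈ Z, f z ≠ 0) ∧ f g = 0, radicalCard b f =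
      radicalPairCount (truncate b [g]) Z := by
    have hsum := card_mul_sum_graph (w := g) (g := (0 : (ι → F) → F)) (fun _ _ => rfl)
      (h := fun f => if ∀ z ∈ Z, f z ≠ 0 then radicalCard (truncate b [g]) f else 0) fun f a => by
        simp only [forall_mem_update_ne_zero_iff hZ,
          radicalCard_truncate_update (List.mem_singleton_self g)]
    rw [← sum_filter, ← sum_filter, filter_filter] at hsum
    rw [radicalPairCount, ← hsum]
    simp only [Pi.zero_apply, and_comm]
    exact congrArg _ (sum_congr rfl fun f hf => hcard (mem_filter.mp hf).2.1)
  have hne : ∑ f with (∀ z ∈ Z, f z ≠ 0) ∧ f g ≠ 0, radicalCard b f =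
      radicalPairCount b (g :: Z) := by
    simp only [radicalPairCount, List.forall_mem_cons, and_comm]
  rw [← hzero, ← hne, ← mul_add, radicalPairCount,
    ← sum_filter_add_sum_filter_not _ (fun f : ι → F => f g = 0), filter_filter, filter_filter]

namespace IsArm

variable {Z : List ι} {α β γ : ι} {c : F}

theorem card_sq_mul_radicalCard (h2 : (2 : F) ≠ 0) (hb : HasExpAd b) (h : IsArm b Z α β γ c)
    {f : ι → F} (hfβ : f β = 0) (hfγ : f γ ≠ 0) :
    Fintype.card F ^ 2 * radicalCard b f = radicalCard (truncate b [α, β]) f := by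
  have hα : α ∈ [α, β] := List.mem_cons_self
  have hβ : β ∈ [α, β] := List.mem_cons_of_mem _ (List.mem_singleton_self β)
  have hgraph_left : Fintype.card F * #{x : ι → F | (∀ y, f ⬝ᵥ truncate b [α, β] x y = 0) ∧
      x α = 0} = radicalCard (truncate b [α, β]) f :=
    card_mul_card_graph (g := 0) (fun _ _ => rfl)
      fun x a => by simp only [dotProduct_truncate, zeroOut_update hα]
  have hgraph_right := card_mul_card_graph (w := β)
    (A := fun x : ι → F => (∀ y, f ⬝ᵥ truncate b [α, β] x y = 0) ∧ x α = 0)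
    (g := fun x => f ⬝ᵥ b (zeroOut [α, β] x) (Pi.single α 1) / (c * f γ))
    (fun x a => by simp only [zeroOut_update hβ]) fun x a => by
      simp only [dotProduct_truncate, zeroOut_update hβ, update_of_ne (h.left_ne_right h2 hb)]
  rw [← hgraph_left, ← hgraph_right, radicalCard]
  simp only [h.forall_dotProduct_eq_zero_iff h2 hb hfβ hfγ]
  ring

theorem radicalCard_straighten (h2 : (2 : F) ≠ 0) (hb : HasExpAd b) (f : ι → F) :
    radicalCard b (straighten b α β γ c f) = radicalCard b f := by
  let e := hb.expAdEquiv h2 α (-f β / (c * f γ))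
  refine card_equiv e fun x => ?_
  simp only [mem_filter, mem_univ, true_and, straighten_dotProduct, hb.expAd_map]
  exact e.forall_congr_left.trans (by simp [e, ← hb.expAdEquiv_apply h2])

/-- The bijection of the proof straightens `f` but stores the old coordinate `f β`, which the
summand ignores. -/
theorem sum_radicalCard_update (h2 : (2 : F) ≠ 0) (hb : HasExpAd b) (h : IsArm b Z α β γ c) :
    ∑ f with ∀ z ∈ Z, f z ≠ 0, radicalCard b (update f β 0) = radicalPairCount b Z := by
  let A : Finset (ι → F) := {f | ∀ z ∈ Z, f z ≠ 0}
  let Ψ (f : ι → F) : ι → F := update (straighten b α β γ c f) β (f β)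
  have hΨ_mem {z : ι} (hz : z ∈ Z) (f : ι → F) : Ψ f z = f z := by
    rw [← h.straighten_apply_mem hb f hz]
    exact update_of_ne (ne_of_mem_of_not_mem hz h.right_notMem) _ _
  have hΨ_update {f : ι → F} (hf : f ∈ A) : update (Ψ f) β 0 = straighten b α β γ c f := by
    have hfγ : f γ ≠ 0 := (mem_filter.mp hf).2 γ h.target_mem
    rw [update_idem, ← h.straighten_apply_right hb hfγ, update_eq_self]
  have hmaps : Set.MapsTo Ψ A A := fun f hf => by
    simpa +contextual [A, hΨ_mem] using hf
  have hinj : Set.InjOn Ψ A := fun f hf f' hf' hff' => by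
    refine straighten_injective h2 hb ?_ ?_ (c := c) (γ := γ) (β := β) (b := b) (α := α) ?_
    · simpa [Ψ] using congrFun hff' β
    · rw [← hΨ_mem h.target_mem f, hff', hΨ_mem h.target_mem]
    · rw [← hΨ_update hf, hff', hΨ_update hf']
  refine (sum_nbij Ψ hmaps hinj (surjOn_of_injOn_of_card_le Ψ hmaps hinj le_rfl) ?_).symm
  intro f hf
  rw [hΨ_update hf, radicalCard_straighten h2 hb]

theorem card_sq_mul_radicalPairCount (h2 : (2 : F) ≠ 0) (hb : HasExpAd b)
    (h : IsArm b Z α β γ c) :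
    Fintype.card F ^ 2 * radicalPairCount b Z = radicalPairCount (truncate b [α, β]) Z := by
  have hβ : β ∈ [α, β] := List.mem_cons_of_mem _ (List.mem_singleton_self β)
  have hγβ : γ ≠ β := ne_of_mem_of_not_mem h.target_mem h.right_notMem
  rw [← h.sum_radicalCard_update h2 hb, mul_sum]
  refine sum_congr rfl fun f hf => ?_
  have hfγ : update f β 0 γ ≠ 0 := by
    rw [update_of_ne hγβ]
    exact (mem_filter.mp hf).2 γ h.target_mem
  rw [h.card_sq_mul_radicalCard h2 hb (update_self _ _ _) hfγ, radicalCard_truncate_update hβ]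

end IsArm

end Count

end Radical

section BracketTables

/-- A nonzero structure constant of a bracket: `coeff * x_left * y_right` is a summand of the
coordinate `target` of `[x, y]`. -/
structure StructureConstant (ι : Type*) where
  left : ι
  right : ι
  target : ι
  coeff : ℤ

/-- An integral form of a bracket, as the list of its structure constants. Anticommutativity is not
built in: both orders of a pair of basis vectors are listed. -/
abbrev BracketTable (ι : Type*) := List (StructureConstant ι)

variable {ι : Type*} [DecidableEq ι]

namespace StructureConstant

/-- A combinatorial criterion for `IsArm`, with `α`, `β`, `γ` the left, right and target indices of
`t`. -/
def GivesArm (T : BracketTable ι) (Z : List ι) (t : StructureConstant ι) : Prop :=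
  t.target ∈ Z ∧ t.left ∉ Z ∧ T.countP (fun u => u.right = t.right) = 1 ∧
    (∀ u ∈ T, u.target ≠ t.left) ∧ (∀ u ∈ T, u.left = t.left → u.right ∉ Z) ∧
    IsTwoPowUpToSign t.coeff

instance (T : BracketTable ι) (Z : List ι) : DecidablePred (GivesArm T Z) :=
  fun _ => inferInstanceAs (Decidable (_ ∧ _ ∧ _ ∧ _ ∧ _ ∧ _))

/-- The target of `t` is a central coordinate not yet known to be nonzero. -/
def HasCentralTarget (T : BracketTable ι) (Z : List ι) (t : StructureConstant ι) : Prop :=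
  t.target ∉ Z ∧ ∀ u ∈ T, u.right ≠ t.target

instance (T : BracketTable ι) (Z : List ι) : DecidablePred (HasCentralTarget T Z) :=
  fun _ => inferInstanceAs (Decidable (_ ∧ _))

end StructureConstant

namespace BracketTable

/-- The table of the bracket with the coordinates in `S` deleted. -/
def avoid (S : List ι) (T : BracketTable ι) : BracketTable ι :=
  T.filter fun t => t.left ∉ S ∧ t.right ∉ S ∧ t.target ∉ S

/-- The equations `f [x, e_i] = 0` for `x` to lie in the radical of `f`. The variable `.inl i`
stands for `f_i`, and `.inr i` for `x_i`. -/
def radicalSystem (T : BracketTable ι) : List (IntPoly (ι ⊕ ι)) :=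
  (T.map StructureConstant.right).dedup.map fun r =>
    (T.filter fun t => t.right = r).map fun t => ⟨t.coeff, [.inr t.left, .inl t.target]⟩

/-- An algorithm for `radicalPairCount`: the result `some P` says that the number of pairs in
dimension `d` is `(v + 1) ^ (d + r) * Nat.ofDigits v P` over every field with `v + 1` elements,
`v + 1` odd. It removes arms as long as there are any, then branches on whether a central coordinate
of `f` vanishes, and leaves what remains to `solve`. -/
def radicalPairCoeffs (d : ℕ) : ℕ → BracketTable ι → List ι → ℕ → Option (List ℕ)
  | 0, _, _, _ => none
  | fuel + 1, T, Z, r =>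
    if T.isEmpty then leafCoeffs d Z.length r
    else match T.find? (StructureConstant.GivesArm T Z ·) with
      | some t => radicalPairCoeffs d fuel (T.avoid [t.left, t.right]) Z (r + 2)
      | none =>
        match T.find? (StructureConstant.HasCentralTarget T Z ·) with
        | some t => Option.map₂ addCoeffs
            (radicalPairCoeffs d fuel (T.avoid [t.target]) Z (r + 1))
            (radicalPairCoeffs d fuel T (t.target :: Z) r)
        | none => solve (d + d) Sum.isRight fuel T.radicalSystem (Z.map .inl) (d + r)

section Bracket

variable (F : Type*) [CommRing F]

/-- The bilinear map with the given structure constants. -/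
def bracket (T : BracketTable ι) : (ι → F) →ₗ[F] (ι → F) →ₗ[F] (ι → F) :=
  (T.map fun t => (LinearMap.proj t.left).smulRight
    ((LinearMap.proj t.right).smulRight (Pi.single t.target (t.coeff : F)))).sum

theorem bracket_nil : bracket F ([] : BracketTable ι) = 0 :=
  rfl

theorem bracket_cons_apply (t : StructureConstant ι) (T : BracketTable ι) (x y : ι → F) :
    bracket F (t :: T) x y = Pi.single t.target (t.coeff * x t.left * y t.right) +
      bracket F T x y := by
  ext i
  simp only [bracket, List.map_cons, List.sum_cons, LinearMap.add_apply,
    LinearMap.smulRight_apply, LinearMap.proj_apply, LinearMap.smul_apply, Pi.add_apply,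
    Pi.smul_apply, Pi.single_apply, smul_eq_mul, mul_ite, mul_zero]
  congr 2
  ring

theorem bracket_apply (T : BracketTable ι) (x y : ι → F) :
    bracket F T x y =
      (T.map fun t => Pi.single t.target (t.coeff * x t.left * y t.right)).sum := by
  induction T with
  | nil => rfl
  | cons t T ih => rw [bracket_cons_apply, ih, List.map_cons, List.sum_cons]

theorem bracket_avoid (S : List ι) (T : BracketTable ι) :
    bracket F (T.avoid S) = truncate (bracket F T) S := by
  ext1 x
  ext1 y
  rw [truncate_apply]
  induction T with
  | nil => simp [avoid, bracket_nil]
  | cons t T ih =>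
    rw [bracket_cons_apply, map_add, zeroOut_single, ← ih, avoid, List.filter_cons]
    by_cases hl : t.left ∈ S <;> by_cases hr : t.right ∈ S <;> by_cases ht : t.target ∈ S <;>
      simp [hl, hr, ht, bracket_cons_apply, zeroOut_apply, avoid]

variable {F}

theorem bracket_apply_single_eq_zero {T : BracketTable ι} {i : ι} (hi : ∀ t ∈ T, t.right ≠ i)
    (x : ι → F) (a : F) : bracket F T x (Pi.single i a) = 0 := by
  rw [bracket_apply]
  refine List.sum_eq_zero (List.forall_mem_map.mpr fun t ht => ?_)
  rw [Pi.single_eq_of_ne (hi t ht), mul_zero, Pi.single_zero]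

theorem bracket_single_single_eq_zero {T : BracketTable ι} {i j : ι}
    (hij : ∀ t ∈ T, t.left = i → t.right ≠ j) (a c : F) :
    bracket F T (Pi.single i a) (Pi.single j c) = 0 := by
  rw [bracket_apply]
  refine List.sum_eq_zero (List.forall_mem_map.mpr fun t ht => ?_)
  by_cases hi : t.left = i
  · rw [Pi.single_eq_of_ne (hij t ht hi), mul_zero, Pi.single_zero]
  · rw [Pi.single_eq_of_ne hi, mul_zero, zero_mul, Pi.single_zero]

theorem bracket_apply_apply_eq_zero {T : BracketTable ι} {i : ι} (hi : ∀ t ∈ T, t.target ≠ i)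
    (x y : ι → F) : bracket F T x y i = 0 := by
  induction T with
  | nil => rfl
  | cons t T ih =>
    obtain ⟨ht, hT⟩ := List.forall_mem_cons.mp hi
    rw [bracket_cons_apply, Pi.add_apply, Pi.single_eq_of_ne ht.symm, ih hT, add_zero]

theorem bracket_apply_single_right {T : BracketTable ι} {t : StructureConstant ι} (ht : t ∈ T)
    (hcount : T.countP (fun u => u.right = t.right) = 1) (x : ι → F) :
    bracket F T x (Pi.single t.right 1) = Pi.single t.target (t.coeff * x t.left) := by
  obtain ⟨T₁, T₂, rfl⟩ := List.append_of_mem ht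
  have hcount₁₂ : T₁.countP (fun u => u.right = t.right) = 0 ∧
      T₂.countP (fun u => u.right = t.right) = 0 := by
    rw [List.countP_append, List.countP_cons_of_pos (by simp)] at hcount
    omega
  have h₁ := bracket_apply_single_eq_zero (by simpa using hcount₁₂.1) x 1
  have h₂ := bracket_apply_single_eq_zero (by simpa using hcount₁₂.2) x 1
  rw [bracket_apply] at h₁ h₂
  rw [bracket_apply, List.map_append, List.sum_append, List.map_cons, List.sum_cons, h₁, h₂,
    zero_add, add_zero, Pi.single_eq_same, mul_one]

end Bracket

end BracketTable

theorem StructureConstant.GivesArm.isArm_bracket {F : Type*} [Field F] (h2 : (2 : F) ≠ 0)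
    {T : BracketTable ι} {Z : List ι} {t : StructureConstant ι} (ht : t ∈ T) (h : t.GivesArm T Z) :
    IsArm (T.bracket F) Z t.left t.right t.target t.coeff := by
  obtain ⟨htarget, hleft, hcount, hleft_target, hleft_right, hcoeff⟩ := h
  exact ⟨hcoeff.cast_ne_zero h2, htarget, hleft, T.bracket_apply_single_right ht hcount,
    T.bracket_apply_apply_eq_zero hleft_target, fun z hz =>
      T.bracket_single_single_eq_zero (fun u hu hul hur => hleft_right u hu hul (hur ▸ hz)) 1 1⟩

section Count

variable {F : Type*} [Field F] [Fintype ι]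

theorem forall_dotProduct_eq_zero_iff_single (L : (ι → F) →ₗ[F] (ι → F)) (f : ι → F) :
    (∀ y, f ⬝ᵥ L y = 0) ↔ ∀ i, f ⬝ᵥ L (Pi.single i 1) = 0 := by
  refine ⟨fun h i => h _, fun h y => ?_⟩
  have hzero : dotProductBilin F F f ∘ₗ L = 0 := LinearMap.pi_ext fun i a => by
    have hsingle : (Pi.single i a : ι → F) = a • Pi.single i 1 := by
      rw [← Pi.single_smul, smul_eq_mul, mul_one]
    rw [hsingle, map_smul, map_smul]
    exact congrArg (a • ·) (h i)
  exact LinearMap.congr_fun hzero y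

namespace BracketTable

theorem dotProduct_bracket_single (T : BracketTable ι) (f x : ι → F) (i : ι) :
    f ⬝ᵥ T.bracket F x (Pi.single i 1) =
      IntPoly.eval (Sum.elim f x)
        ((T.filter fun t => t.right = i).map fun t => ⟨t.coeff, [.inr t.left, .inl t.target]⟩) := by
  induction T with
  | nil => simp [bracket_nil]
  | cons t T ih =>
    rw [bracket_cons_apply, dotProduct_add, ih, dotProduct_single, List.filter_cons]
    by_cases ht : t.right = i
    · subst ht
      simp [IntTerm.eval]
      ring
    · simp [ht]

theorem forall_dotProduct_bracket_eq_zero_iff (T : BracketTable ι) (f x : ι → F) :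
    (∀ y, f ⬝ᵥ T.bracket F x y = 0) ↔
      ∀ p ∈ T.radicalSystem, IntPoly.eval (Sum.elim f x) p = 0 := by
  rw [forall_dotProduct_eq_zero_iff_single, radicalSystem, List.forall_mem_map]
  simp only [List.mem_dedup, ← dotProduct_bracket_single]
  refine ⟨fun h i _ => h i, fun h i => ?_⟩
  by_cases hi : i ∈ T.map StructureConstant.right
  · exact h i hi
  · rw [bracket_apply_single_eq_zero (fun t ht hti => hi (List.mem_map.mpr ⟨t, ht, hti⟩)),
      dotProduct_zero]

variable [Fintype F] [DecidableEq F]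

theorem radicalPairCount_bracket (T : BracketTable ι) (Z : List ι) :
    radicalPairCount (T.bracket F) Z = solutionCount F T.radicalSystem (Z.map .inl) := by
  rw [radicalPairCount_eq_card, solutionCount]
  refine (card_equiv (Equiv.sumArrowEquivProdArrow ι ι F) fun σ => ?_).symm
  have hσ : Sum.elim (σ ∘ Sum.inl) (σ ∘ Sum.inr) = σ := Sum.elim_comp_inl_inr σ
  simp only [mem_filter, mem_univ, true_and, Equiv.sumArrowEquivProdArrow, Equiv.coe_fn_mk,
    forall_dotProduct_bracket_eq_zero_iff, hσ, IsSolution, List.forall_mem_map]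
  rfl

theorem radicalPairCount_of_radicalPairCoeffs (h2 : (2 : F) ≠ 0) {v d : ℕ}
    (hv : Fintype.card F = v + 1) (hd : Fintype.card ι = d) {fuel r : ℕ} {T : BracketTable ι}
    {Z : List ι} (hT : HasExpAd (T.bracket F)) (hZ : Z.Nodup) {P : List ℕ}
    (hP : radicalPairCoeffs d fuel T Z r = some P) :
    radicalPairCount (T.bracket F) Z = (v + 1) ^ (d + r) * Nat.ofDigits v P := by
  induction fuel generalizing T Z r P with
  | zero => simp [radicalPairCoeffs] at hP
  | succ fuel ih =>
    rw [radicalPairCoeffs] at hP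
    split_ifs at hP with hnil
    · rw [List.isEmpty_iff.mp hnil, bracket_nil, radicalPairCount_zero hZ, hv, hd,
        Nat.add_sub_cancel, leafCoeffs_sound hP]
      ring
    split at hP
    case h_1 t ht =>
      have harm : t.GivesArm T Z := by simpa using List.find?_some ht
      have harm' := harm.isArm_bracket h2 (List.mem_of_find?_eq_some ht)
      have hT' := bracket_avoid F _ T ▸ harm'.hasExpAd_truncate h2 hT
      apply Nat.eq_of_mul_eq_mul_left (pow_pos (Nat.add_one_pos v) 2)
      rw [← hv, harm'.card_sq_mul_radicalPairCount h2 hT, ← bracket_avoid, ih hT' hZ hP, hv]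
      ring
    case h_2 =>
      split at hP
      case h_1 t ht =>
        obtain ⟨htZ, htT⟩ : t.HasCentralTarget T Z := by simpa using List.find?_some ht
        have hcentral (x : ι → F) := T.bracket_apply_single_eq_zero htT x 1
        have hT' := bracket_avoid F _ T ▸ hT.truncate_singleton hcentral
        obtain ⟨P₀, P₁, hP₀, hP₁, rfl⟩ := Option.map₂_eq_some_iff.mp hP
        apply Nat.eq_of_mul_eq_mul_left (Nat.add_one_pos v)
        rw [← hv, card_mul_radicalPairCount_eq_add hT.anticomm hcentral htZ, ← bracket_avoid,
          ih hT' hZ hP₀, ih hT (List.nodup_cons.mpr ⟨htZ, hZ⟩) hP₁, ofDigits_addCoeffs, hv]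
        ring
      case h_2 =>
        rw [radicalPairCount_bracket]
        exact solutionCount_of_solve h2 hv (by simp [hd]) (hZ.map Sum.inl_injective) hP

end BracketTable

end Count

end BracketTables

section Duality

variable {ι F : Type*} [Field F] [Fintype F] [DecidableEq F] [Fintype ι] [DecidableEq ι]

theorem card_mulVec_eq_zero (A : Matrix ι ι F) :
    #{x : ι → F | A *ᵥ x = 0} = Fintype.card F ^ (Fintype.card ι - A.rank) := by
  have hrank := A.mulVecLin.finrank_range_add_finrank_ker
  rw [← Matrix.rank, Module.finrank_fintype_fun_eq_card] at hrank
  rw [← Nat.card_eq_fintype_card (α := F), ← hrank, Nat.add_sub_cancel_left,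
    ← Module.natCard_eq_pow_finrank (K := F), ← Fintype.card_subtype, ← Nat.card_eq_fintype_card]
  rfl

theorem card_forall_dotProduct_eq_zero (L : (ι → F) →ₗ[F] (ι → F)) :
    #{f : ι → F | ∀ y, f ⬝ᵥ L y = 0} = #{y : ι → F | L y = 0} := by
  have hleft (f : ι → F) : (∀ y, f ⬝ᵥ L y = 0) ↔ (LinearMap.toMatrix' L)ᵀ *ᵥ f = 0 := by
    rw [Matrix.mulVec_transpose, ← dotProduct_eq_zero_iff]
    simp only [← Matrix.dotProduct_mulVec, LinearMap.toMatrix'_mulVec]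
  have hright (y : ι → F) : L y = 0 ↔ LinearMap.toMatrix' L *ᵥ y = 0 := by
    rw [LinearMap.toMatrix'_mulVec]
  simp only [hleft, hright, card_mulVec_eq_zero, Matrix.rank_transpose]

theorem card_apply_eq_zero (b : (ι → F) →ₗ[F] (ι → F) →ₗ[F] (ι → F)) :
    #{p : (ι → F) × (ι → F) | b p.1 p.2 = 0} = radicalPairCount b [] := by
  have hradical : radicalPairCount b [] = ∑ x, #{f : ι → F | ∀ y, f ⬝ᵥ b x y = 0} := by
    simp only [radicalPairCount, radicalCard, List.not_mem_nil, false_implies, implies_true,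
      filter_true, card_filter]
    exact sum_comm
  rw [hradical, card_filter, Fintype.sum_prod_type]
  exact sum_congr rfl fun x _ => by rw [card_forall_dotProduct_eq_zero, card_filter]

end Duality

section ExpAd

variable {ι F R : Type*} [Field F] [Ring R] [Algebra F R]

theorem map_expAd (h2 : (2 : F) ≠ 0) {b : (ι → F) →ₗ[F] (ι → F) →ₗ[F] (ι → F)}
    {M : (ι → F) →ₗ[F] R} (hM : ∀ x y, M (b x y) = M x * M y - M y * M x) {u : ι → F}
    (hu : M u * M u = 0) (x : ι → F) : M (expAd b u x) = (1 + M u) * M x * (1 - M u) := by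
  have hsq : M (b u (b u x)) = (2 : F) • -(M u * M x * M u) := by
    rw [hM, hM, two_smul, mul_sub, sub_mul, ← mul_assoc, hu, mul_assoc (M x), hu]
    noncomm_ring
  rw [expAd_apply, map_add, map_add, map_smul, hsq, inv_smul_smul₀ h2, hM]
  noncomm_ring

theorem hasExpAd_of_injective [DecidableEq ι] (h2 : (2 : F) ≠ 0)
    {b : (ι → F) →ₗ[F] (ι → F) →ₗ[F] (ι → F)} {M : (ι → F) →ₗ[F] R} (hinj : Injective M)
    (hM : ∀ x y, M (b x y) = M x * M y - M y * M x)
    (hsq : ∀ i t, M (Pi.single i t) * M (Pi.single i t) = 0) : HasExpAd b where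
  anticomm x y := hinj <| by rw [hM, map_neg, hM, neg_sub]
  ad_cube i t x := hinj <| by
    have hsq' (X : R) : M (Pi.single i t) * (M (Pi.single i t) * X) = 0 := by
      rw [← mul_assoc, hsq, zero_mul]
    simp only [hM, map_zero, mul_sub, sub_mul, mul_assoc, hsq, hsq', mul_zero, sub_zero, zero_sub,
      mul_neg, neg_mul, sub_self, neg_zero]
  expAd_map i t x y := hinj <| by
    have hinv : (1 - M (Pi.single i t)) * (1 + M (Pi.single i t)) = 1 := by
      rw [sub_mul, one_mul, mul_add, mul_one, hsq, add_zero, add_sub_cancel_right]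
    simp only [hM, map_expAd h2 hM (hsq i t)]
    have hconj (X Y : R) : (1 + M (Pi.single i t)) * X * (1 - M (Pi.single i t)) *
        ((1 + M (Pi.single i t)) * Y * (1 - M (Pi.single i t))) =
        (1 + M (Pi.single i t)) * (X * Y) * (1 - M (Pi.single i t)) := by
      rw [mul_assoc _ Y, mul_assoc (_ * X), ← mul_assoc (1 - _), hinv, one_mul]
      simp only [mul_assoc]
    rw [hconj, hconj, ← sub_mul, ← mul_sub]

end ExpAd

section SymplecticTable

theorem BracketTable.bracket_append_apply {ι F : Type*} [DecidableEq ι] [CommRing F]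
    (T T' : BracketTable ι) (x y : ι → F) :
    bracket F (T ++ T') x y = bracket F T x y + bracket F T' x y := by
  simp only [bracket_apply, List.map_append, List.sum_append]

theorem BracketTable.bracket_flatMap_apply {α ι F : Type*} [DecidableEq ι] [CommRing F] (l : List α)
    (T : α → BracketTable ι) (x y : ι → F) :
    bracket F (l.flatMap T) x y = (l.map fun a => bracket F (T a) x y).sum := by
  induction l with
  | nil => rfl
  | cons a l ih => rw [List.flatMap_cons, bracket_append_apply, ih, List.map_cons, List.sum_cons]

variable {n : ℕ}

/-- The index of the coordinate that holds the `(i, j)` and the `(j, i)` entry of a symmetric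
matrix. It lies in the lower triangle, as the strict upper triangle is used for `leviBlock`. -/
def symmIndex (i j : Fin n) : Fin n × Fin n := (max i j, min i j)

theorem symmIndex_comm (i j : Fin n) : symmIndex i j = symmIndex j i := by
  rw [symmIndex, max_comm, min_comm, symmIndex]

theorem symmIndex_inj {i j k l : Fin n} :
    symmIndex i j = symmIndex k l ↔ i = k ∧ j = l ∨ i = l ∧ j = k := by
  simp only [symmIndex, Prod.mk.injEq]
  grind

theorem symmIndex_ne {i j k l : Fin n} (hkl : k < l) : symmIndex i j ≠ (k, l) := by
  simp only [symmIndex, ne_eq, Prod.mk.injEq]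
  grind

/-- The two structure constants expressing `[e_a, e_b] = k * e_c`. -/
def bracketEntries {ι : Type*} (a b c : ι) (k : ℤ) : BracketTable ι :=
  [⟨a, b, c, k⟩, ⟨b, a, c, -k⟩]

theorem bracket_bracketEntries {ι F : Type*} [DecidableEq ι] [CommRing F] (a b c : ι) (k : ℤ)
    (x y : ι → F) : (bracketEntries a b c k).bracket F x y =
      Pi.single c (k * (x a * y b - x b * y a)) := by
  rw [bracketEntries, BracketTable.bracket_cons_apply, BracketTable.bracket_cons_apply,
    BracketTable.bracket_nil, LinearMap.zero_apply, LinearMap.zero_apply, add_zero,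
    ← Pi.single_add]
  push_cast
  congr 1
  ring

/-- The brackets of the root vector at `(i, m)` in the Levi block with those at `(m, j)` in the
symmetric and in the Levi block. The factor `2` accounts for the long roots. -/
def spEntries (m i j : Fin n) : BracketTable (Fin n × Fin n) :=
  if i < m then
    bracketEntries (i, m) (symmIndex m j) (symmIndex i j) (if i = j then 2 else 1) ++
      if m < j then bracketEntries (i, m) (m, j) (i, j) 1 else []
  else []

variable (n) in
/-- The maximal nilpotent subalgebra of `𝔰𝔭₂ₙ` spanned by the positive root vectors, in the
coordinates of `spMatrix`. The order of the entries does not affect the bracket, only the choices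
made by `BracketTable.radicalPairCoeffs`. -/
def spTable : BracketTable (Fin n × Fin n) :=
  (List.finRange n).reverse.flatMap fun m => (List.finRange n).flatMap fun i =>
    (List.finRange n).flatMap fun j => spEntries m i j

variable {F : Type*} [CommRing F]

theorem bracket_spEntries (m i j : Fin n) (x y : Fin n × Fin n → F) :
    (spEntries m i j).bracket F x y = if i < m then
      Pi.single (symmIndex i j) ((if i = j then 2 else 1) *
        (x (i, m) * y (symmIndex m j) - x (symmIndex m j) * y (i, m))) +
      (if m < j then Pi.single (i, j) (x (i, m) * y (m, j) - x (m, j) * y (i, m)) else 0)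
      else 0 := by
  rw [spEntries]
  split_ifs <;>
    simp [BracketTable.bracket_append_apply, bracket_bracketEntries, BracketTable.bracket_nil]

theorem bracket_spTable (x y : Fin n × Fin n → F) :
    (spTable n).bracket F x y = ∑ m, ∑ i, ∑ j, (spEntries m i j).bracket F x y := by
  simp only [spTable, BracketTable.bracket_flatMap_apply, List.map_reverse, List.sum_reverse,
    ← Fin.sum_univ_def]

/-- The strictly upper triangular `n × n` matrix with the given coordinates `(i, j)`, `i < j`. -/
def leviBlock : (Fin n × Fin n → F) →ₗ[F] Matrix (Fin n) (Fin n) F where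
  toFun x := .of fun i j => if i < j then x (i, j) else 0
  map_add' x y := by ext i j; by_cases hij : i < j <;> simp [hij]
  map_smul' a x := by ext i j; by_cases hij : i < j <;> simp [hij]

/-- The symmetric `n × n` matrix with the given coordinates `(i, j)`, `j ≤ i`. -/
def symmBlock : (Fin n × Fin n → F) →ₗ[F] Matrix (Fin n) (Fin n) F where
  toFun x := .of fun i j => x (symmIndex i j)
  map_add' _ _ := rfl
  map_smul' _ _ := rfl

theorem leviBlock_apply (x : Fin n × Fin n → F) (i j : Fin n) :
    leviBlock x i j = if i < j then x (i, j) else 0 :=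
  rfl

theorem symmBlock_apply (x : Fin n × Fin n → F) (i j : Fin n) :
    symmBlock x i j = x (symmIndex i j) :=
  rfl

theorem symmBlock_transpose (x : Fin n × Fin n → F) : (symmBlock x)ᵀ = symmBlock x := by
  ext i j
  rw [transpose_apply, symmBlock_apply, symmBlock_apply, symmIndex_comm]

theorem leviBlock_single_symmIndex (i j : Fin n) (a : F) :
    leviBlock (Pi.single (symmIndex i j) a) = 0 := by
  ext k l
  rw [leviBlock_apply, Matrix.zero_apply]
  split_ifs with hkl
  · rw [Pi.single_eq_of_ne (symmIndex_ne hkl).symm]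
  · rfl

theorem symmBlock_single_of_lt {i j : Fin n} (hij : i < j) (a : F) :
    symmBlock (Pi.single (i, j) a) = 0 := by
  ext k l
  rw [symmBlock_apply, Pi.single_eq_of_ne (symmIndex_ne hij), Matrix.zero_apply]

theorem leviBlock_single_of_lt {i j : Fin n} (hij : i < j) (a : F) :
    leviBlock (Pi.single (i, j) a) = Matrix.single i j a := by
  ext k l
  rw [leviBlock_apply, Pi.single_apply, single_apply]
  grind

theorem symmBlock_single_symmIndex (i j : Fin n) (a : F) :
    symmBlock (Pi.single (symmIndex i j) ((if i = j then 2 else 1) * a)) =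
      Matrix.single i j a + Matrix.single j i a := by
  ext k l
  simp only [symmBlock_apply, Pi.single_apply, Matrix.add_apply, single_apply, symmIndex_inj]
  grind

theorem leviBlock_bracket_spEntries (m i j : Fin n) (x y : Fin n × Fin n → F) :
    leviBlock ((spEntries m i j).bracket F x y) =
      Matrix.single i j
        (leviBlock x i m * leviBlock y m j - leviBlock y i m * leviBlock x m j) := by
  simp only [bracket_spEntries, leviBlock_apply]
  by_cases him : i < m
  · by_cases hmj : m < j
    · simp only [if_pos him, if_pos hmj, map_add, leviBlock_single_symmIndex,
        leviBlock_single_of_lt (him.trans hmj), zero_add, mul_comm]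
    · simp only [if_pos him, if_neg hmj, add_zero, leviBlock_single_symmIndex, mul_zero, sub_zero,
        single_zero]
  · simp only [if_neg him, map_zero, zero_mul, sub_zero, single_zero]

theorem symmBlock_bracket_spEntries (m i j : Fin n) (x y : Fin n × Fin n → F) :
    symmBlock ((spEntries m i j).bracket F x y) =
      Matrix.single i j (leviBlock x i m * symmBlock y m j - leviBlock y i m * symmBlock x m j) +
        (Matrix.single i j
          (leviBlock x i m * symmBlock y m j - leviBlock y i m * symmBlock x m j))ᵀ := by
  simp only [bracket_spEntries, leviBlock_apply, symmBlock_apply, transpose_single]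
  by_cases him : i < m
  · have hlevi : symmBlock (if m < j then
        Pi.single (i, j) (x (i, m) * y (m, j) - x (m, j) * y (i, m)) else 0) = 0 := by
      split_ifs with hmj
      · exact symmBlock_single_of_lt (him.trans hmj) _
      · exact map_zero _
    simp only [if_pos him, map_add, hlevi, add_zero, symmBlock_single_symmIndex,
      mul_comm (y (i, m))]
  · simp only [if_neg him, map_zero, zero_mul, sub_zero, single_zero, add_zero]

theorem mul_sub_mul_eq_sum_single (A B C D : Matrix (Fin n) (Fin n) F) :
    A * B - C * D = ∑ m, ∑ i, ∑ j, Matrix.single i j (A i m * B m j - C i m * D m j) := by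
  conv_lhs => rw [matrix_eq_sum_single (A * B - C * D)]
  conv_rhs => rw [sum_comm]
  refine sum_congr rfl fun i _ => ?_
  conv_rhs => rw [sum_comm]
  refine sum_congr rfl fun j _ => ?_
  simp only [Matrix.sub_apply, mul_apply, ← sum_sub_distrib, ← singleAddMonoidHom_apply, map_sum]

theorem leviBlock_bracket (x y : Fin n × Fin n → F) :
    leviBlock ((spTable n).bracket F x y) =
      leviBlock x * leviBlock y - leviBlock y * leviBlock x := by
  simp only [bracket_spTable, map_sum, leviBlock_bracket_spEntries, mul_sub_mul_eq_sum_single]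

theorem symmBlock_bracket (x y : Fin n × Fin n → F) :
    symmBlock ((spTable n).bracket F x y) =
      (leviBlock x * symmBlock y - leviBlock y * symmBlock x) +
        (leviBlock x * symmBlock y - leviBlock y * symmBlock x)ᵀ := by
  simp only [bracket_spTable, map_sum, symmBlock_bracket_spEntries, mul_sub_mul_eq_sum_single,
    sum_add_distrib, transpose_sum]

/-- The element of the maximal nilpotent subalgebra of `𝔰𝔭₂ₙ` with the given coordinates. -/
def spMatrix : (Fin n × Fin n → F) →ₗ[F] Matrix (Fin n ⊕ Fin n) (Fin n ⊕ Fin n) F where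
  toFun x := fromBlocks (leviBlock x) (symmBlock x) 0 (-(leviBlock x)ᵀ)
  map_add' x y := by simp [fromBlocks_add, add_comm]
  map_smul' a x := by simp [fromBlocks_smul]

theorem spMatrix_apply (x : Fin n × Fin n → F) :
    spMatrix x = fromBlocks (leviBlock x) (symmBlock x) 0 (-(leviBlock x)ᵀ) :=
  rfl

theorem spMatrix_injective : Injective (spMatrix (n := n) (F := F)) := by
  intro x y hxy
  obtain ⟨hlevi, hsymm, -⟩ := fromBlocks_inj.mp hxy
  ext ⟨i, j⟩
  by_cases hij : i < j
  · simpa [leviBlock_apply, hij] using congrFun₂ hlevi i j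
  · have hindex : symmIndex i j = (i, j) := by
      rw [symmIndex, max_eq_left (not_lt.mp hij), min_eq_right (not_lt.mp hij)]
    simpa [symmBlock_apply, hindex] using congrFun₂ hsymm i j

theorem spMatrix_bracket (x y : Fin n × Fin n → F) :
    spMatrix ((spTable n).bracket F x y) = spMatrix x * spMatrix y - spMatrix y * spMatrix x := by
  simp only [spMatrix_apply, fromBlocks_multiply, sub_eq_add_neg, fromBlocks_neg, fromBlocks_add,
    fromBlocks_inj, leviBlock_bracket, symmBlock_bracket, transpose_add, transpose_neg,
    transpose_mul, symmBlock_transpose, Matrix.mul_neg, Matrix.neg_mul, Matrix.mul_zero,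
    Matrix.zero_mul]
  refine ⟨?_, ?_, ?_, ?_⟩ <;> abel

theorem spMatrix_single_mul_self (i : Fin n × Fin n) (a : F) :
    spMatrix (Pi.single i a) * spMatrix (Pi.single i a) = 0 := by
  obtain ⟨i, j⟩ := i
  simp only [spMatrix_apply, fromBlocks_multiply]
  obtain hij | hji := lt_or_ge i j
  · simp [leviBlock_single_of_lt hij, symmBlock_single_of_lt hij, hij.ne, hij.ne']
  · have hindex : (i, j) = symmIndex i j := by
      rw [symmIndex, max_eq_left hji, min_eq_right hji]
    simp [hindex, leviBlock_single_symmIndex]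

theorem hasExpAd_bracket_spTable {F : Type*} [Field F] (h2 : (2 : F) ≠ 0) :
    HasExpAd ((spTable n).bracket F) :=
  hasExpAd_of_injective h2 spMatrix_injective spMatrix_bracket spMatrix_single_mul_self

end SymplecticTable

section Cayley

variable {A : Type*} [Ring A]

/-- The Cayley transform `(1 + a) / (1 - a)`, which has the junk value `0` unless `1 - a` is a
unit. -/
noncomputable def cayley (a : A) : A := (1 + a) * Ring.inverse (1 - a)

theorem cayley_mul_one_sub {a : A} (ha : IsUnit (1 - a)) : cayley a * (1 - a) = 1 + a := by
  rw [cayley, mul_assoc, Ring.inverse_mul_cancel _ ha, mul_one]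

theorem cayley_sub_one {a : A} (ha : IsUnit (1 - a)) :
    cayley a - 1 = (a + a) * Ring.inverse (1 - a) := by
  rw [Ring.eq_mul_inverse_iff_mul_eq _ _ _ ha, sub_mul, cayley_mul_one_sub ha, one_mul]
  abel

theorem one_add_cayley {a : A} (ha : IsUnit (1 - a)) :
    1 + cayley a = 2 * Ring.inverse (1 - a) := by
  rw [Ring.eq_mul_inverse_iff_mul_eq _ _ _ ha, add_mul, cayley_mul_one_sub ha, one_mul,
    ← one_add_one_eq_two]
  abel

theorem isUnit_one_add_cayley (h2 : IsUnit (2 : A)) {a : A} (ha : IsUnit (1 - a)) :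
    IsUnit (1 + cayley a) :=
  one_add_cayley ha ▸ h2.mul ha.ringInverse

theorem cayley_neg_cayley (h2 : IsUnit (2 : A)) {a : A} (ha : IsUnit (1 - a)) :
    cayley (-cayley a) = -a := by
  rw [cayley, sub_neg_eq_add, eq_comm,
    Ring.eq_mul_inverse_iff_mul_eq _ _ _ (isUnit_one_add_cayley h2 ha), ← ha.mul_left_inj,
    mul_assoc, add_mul, add_mul, neg_mul, neg_mul, cayley_mul_one_sub ha]
  noncomm_ring

theorem cayley_injOn (h2 : IsUnit (2 : A)) : Set.InjOn cayley {a : A | IsUnit (1 - a)} :=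
  fun a ha b hb hab => neg_injective <| by
    rw [← cayley_neg_cayley h2 ha, hab, cayley_neg_cayley h2 hb]

theorem commute_cayley {a b : A} (ha : IsUnit (1 - a)) (hb : IsUnit (1 - b)) (h : Commute a b) :
    Commute (cayley a) (cayley b) := by
  have hinverse : Commute (Ring.inverse (1 - a)) (Ring.inverse (1 - b)) :=
    ((Commute.one_left _).sub_left ((Commute.one_right a).sub_right h)).ringInverse_ringInverse
  rw [← add_sub_cancel_left 1 (cayley a), ← add_sub_cancel_left 1 (cayley b), one_add_cayley ha,
    one_add_cayley hb, two_mul, two_mul]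
  have hdouble := (hinverse.add_left hinverse).add_right (hinverse.add_left hinverse)
  exact (hdouble.sub_left (Commute.one_left _)).sub_right (Commute.one_right _)

theorem commute_cayley_iff (h2 : IsUnit (2 : A)) {a b : A} (ha : IsUnit (1 - a))
    (hb : IsUnit (1 - b)) : Commute (cayley a) (cayley b) ↔ Commute a b := by
  refine ⟨fun h => ?_, commute_cayley ha hb⟩
  rw [← Commute.neg_left_iff, ← Commute.neg_right_iff, ← cayley_neg_cayley h2 ha,
    ← cayley_neg_cayley h2 hb]
  refine commute_cayley ?_ ?_ h.neg_left.neg_right <;> rw [sub_neg_eq_add]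
  exacts [isUnit_one_add_cayley h2 ha, isUnit_one_add_cayley h2 hb]

theorem cayley_mem_symplecticGroup_iff {l R : Type*} [Fintype l] [DecidableEq l] [CommRing R]
    (h2 : IsUnit (2 : Matrix (l ⊕ l) (l ⊕ l) R)) {N : Matrix (l ⊕ l) (l ⊕ l) R}
    (hN : IsUnit (1 - N)) :
    cayley N ∈ symplecticGroup l R ↔ N ∈ LieAlgebra.Symplectic.sp l R := by
  have hform : (1 - N)ᵀ * ((cayley N)ᵀ * J l R * cayley N - J l R) * (1 - N) =
      2 * (Nᵀ * J l R + J l R * N) := by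
    have htranspose : (1 - N)ᵀ * (cayley N)ᵀ = (1 + N)ᵀ := by
      rw [← transpose_mul, cayley_mul_one_sub hN]
    calc (1 - N)ᵀ * ((cayley N)ᵀ * J l R * cayley N - J l R) * (1 - N)
        = (1 - N)ᵀ * (cayley N)ᵀ * J l R * (cayley N * (1 - N)) -
            (1 - N)ᵀ * J l R * (1 - N) := by noncomm_ring
      _ = 2 * (Nᵀ * J l R + J l R * N) := by
          rw [htranspose, cayley_mul_one_sub hN, transpose_add, transpose_sub, transpose_one]
          noncomm_ring
  rw [SymplecticGroup.mem_iff', ← sub_eq_zero,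
    ← (isUnit_transpose (1 - N)).mpr hN |>.mul_right_eq_zero, ← hN.mul_left_eq_zero, hform,
    h2.mul_right_eq_zero, LieAlgebra.Symplectic.sp, mem_skewAdjointMatricesLieSubalgebra,
    mem_skewAdjointMatricesSubmodule, Matrix.IsSkewAdjoint, Matrix.IsAdjointPair, Matrix.mul_neg,
    eq_neg_iff_add_eq_zero]

end Cayley

section Raising

variable {ι R : Type*} [CommRing R] {r : ι → ℕ} {k l : ℕ}

/-- The matrices that lower the filtration `flag F r` by at least `k` steps, that is, whose `(i, j)`
entry is zero unless `r j` exceeds `r i` by at least `k`. -/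
def raising (R : Type*) [CommRing R] (r : ι → ℕ) (k : ℕ) : Submodule R (Matrix ι ι R) where
  carrier := {N | ∀ i j, N i j ≠ 0 → r i + k ≤ r j}
  add_mem' {A B} hA hB i j hij := by
    by_contra hlt
    rw [Matrix.add_apply, not_imp_comm.mp (hA i j) hlt, not_imp_comm.mp (hB i j) hlt,
      add_zero] at hij
    exact hij rfl
  zero_mem' _ _ hij := absurd rfl hij
  smul_mem' _ _ hA i j hij := hA i j (right_ne_zero_of_mul hij)

theorem raising_antitone : Antitone (raising R r) :=
  fun _ _ hkl _ hA i j hij => (Nat.add_le_add_left hkl _).trans (hA i j hij)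

theorem one_mem_raising [DecidableEq ι] : (1 : Matrix ι ι R) ∈ raising R r 0 := by
  intro i j hij
  rw [not_imp_comm.mp one_apply_ne hij, add_zero]

variable [Fintype ι]

theorem mul_mem_raising {A B : Matrix ι ι R} (hA : A ∈ raising R r k) (hB : B ∈ raising R r l) :
    A * B ∈ raising R r (k + l) := by
  intro i j hij
  obtain ⟨m, -, hm⟩ := exists_ne_zero_of_sum_ne_zero hij
  have him := hA i m (left_ne_zero_of_mul hm)
  have hmj := hB m j (right_ne_zero_of_mul hm)
  lia

variable [DecidableEq ι]

theorem pow_mem_raising {N : Matrix ι ι R} (hN : N ∈ raising R r 1) (m : ℕ) :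
    N ^ m ∈ raising R r m := by
  induction m with
  | zero => exact one_mem_raising
  | succ m ih => exact mul_mem_raising ih hN

theorem isNilpotent_of_mem_raising {N : Matrix ι ι R} (hN : N ∈ raising R r 1) :
    IsNilpotent N := by
  refine ⟨univ.sup r + 1, ext fun i j => ?_⟩
  by_contra hij
  have hr := pow_mem_raising hN _ i j hij
  have hj : r j ≤ univ.sup r := le_sup (mem_univ j)
  lia

theorem isUnit_one_sub_of_mem_raising {N : Matrix ι ι R} (hN : N ∈ raising R r 1) :
    IsUnit (1 - N) :=
  (isNilpotent_of_mem_raising hN).isUnit_one_sub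

theorem inverse_one_sub_mem_raising {N : Matrix ι ι R} (hN : N ∈ raising R r 1) :
    Ring.inverse (1 - N) ∈ raising R r 0 := by
  obtain ⟨m, hm⟩ := isNilpotent_of_mem_raising hN
  have hgeom : ∑ i ∈ range m, N ^ i = Ring.inverse (1 - N) :=
    left_inv_eq_right_inv (by rw [geom_sum_mul_neg, hm, sub_zero])
      (Ring.mul_inverse_cancel _ (isUnit_one_sub_of_mem_raising hN))
  rw [← hgeom]
  exact sum_mem fun i _ => raising_antitone (Nat.zero_le i) (pow_mem_raising hN i)

theorem inv_sub_one_mem_raising {g : Matrix ι ι R} (hg : g - 1 ∈ raising R r 1) :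
    g⁻¹ - 1 ∈ raising R r 1 := by
  have hunit := isUnit_one_sub_of_mem_raising (neg_mem hg)
  have hinverse := inverse_one_sub_mem_raising (neg_mem hg)
  rw [sub_neg_eq_add, add_sub_cancel] at hunit hinverse
  have hinv : g⁻¹ - 1 = -(g - 1) * Ring.inverse g := by
    rw [nonsing_inv_eq_ringInverse, Ring.eq_mul_inverse_iff_mul_eq _ _ _ hunit, sub_mul,
      Ring.inverse_mul_cancel _ hunit]
    noncomm_ring
  rw [hinv]
  exact mul_mem_raising (neg_mem hg) hinverse

theorem cayley_sub_one_mem_raising {N : Matrix ι ι R} (hN : N ∈ raising R r 1) :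
    cayley N - 1 ∈ raising R r 1 := by
  rw [cayley_sub_one (isUnit_one_sub_of_mem_raising hN)]
  exact mul_mem_raising (add_mem hN hN) (inverse_one_sub_mem_raising hN)

/-- Solving `(1 + N) / (1 - N) = g` for `N` gives `N = 1 - (1 - X)⁻¹` with `1 - X = (1 + g) / 2`. -/
theorem exists_cayley_eq (h2 : IsUnit (2 : R)) {g : Matrix ι ι R} (hg : g - 1 ∈ raising R r 1) :
    ∃ N ∈ raising R r 1, cayley N = g := by
  obtain ⟨c, hc⟩ := h2.exists_left_inv
  set X := -(c • (g - 1)) with hX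
  have hXmem : X ∈ raising R r 1 := neg_mem (Submodule.smul_mem _ c hg)
  have hunit := isUnit_one_sub_of_mem_raising hXmem
  have hg_eq : g = 1 - X - X := by
    rw [hX, sub_neg_eq_add, sub_neg_eq_add, add_assoc, ← two_smul R (c • (g - 1)), smul_smul,
      mul_comm, hc, one_smul, add_sub_cancel]
  have hN : 1 - Ring.inverse (1 - X) = -X * Ring.inverse (1 - X) := by
    rw [Ring.eq_mul_inverse_iff_mul_eq _ _ _ hunit, sub_mul, Ring.inverse_mul_cancel _ hunit]
    noncomm_ring
  refine ⟨1 - Ring.inverse (1 - X), ?_, ?_⟩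
  · rw [hN]
    exact mul_mem_raising (neg_mem hXmem) (inverse_one_sub_mem_raising hXmem)
  · rw [cayley, sub_sub_cancel, Ring.inverse_inverse hunit, add_mul, sub_mul,
      Ring.inverse_mul_cancel _ hunit, hg_eq]
    noncomm_ring

theorem cayley_sub_one_sub_mem_raising {N : Matrix ι ι R} (hN : N ∈ raising R r 1) :
    cayley N - 1 - (N + N) ∈ raising R r 2 := by
  have hunit := isUnit_one_sub_of_mem_raising hN
  have hcayley : cayley N - 1 - (N + N) = (N + N) * N * Ring.inverse (1 - N) := by
    rw [cayley_sub_one hunit, Ring.eq_mul_inverse_iff_mul_eq _ _ _ hunit, sub_mul,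
      mul_assoc (N + N), Ring.inverse_mul_cancel _ hunit]
    noncomm_ring
  rw [hcayley]
  exact mul_mem_raising (mul_mem_raising (add_mem hN hN) hN) (inverse_one_sub_mem_raising hN)

end Raising

section Flag

variable {ι F : Type*} [Field F] {r : ι → ℕ} {k : ℕ}

/-- The step `k` of the flag of coordinate subspaces for the ordering of the coordinates by `r`,
spanned by the coordinate vectors of index `i` with `r i < k`. -/
def flag (F : Type*) [CommRing F] (r : ι → ℕ) (k : ℕ) : Submodule F (ι → F) where
  carrier := {v | ∀ i, k ≤ r i → v i = 0}
  add_mem' hv hw i hi := by rw [Pi.add_apply, hv i hi, hw i hi, add_zero]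
  zero_mem' _ _ := rfl
  smul_mem' a v hv i hi := by rw [Pi.smul_apply, hv i hi, smul_zero]

theorem mem_flag {v : ι → F} : v ∈ flag F r k ↔ ∀ i, k ≤ r i → v i = 0 :=
  Iff.rfl

theorem flag_wcovBy (hr : Injective r) : flag F r k ⩿ flag F r (k + 1) := by
  refine ⟨fun v hv i hi => hv i (k.le_succ.trans hi), fun X hX hX' => ?_⟩
  obtain ⟨w, hwX, hw⟩ := Set.exists_of_ssubset hX
  obtain ⟨i, hi, hwi⟩ : ∃ i, k ≤ r i ∧ w i ≠ 0 := by
    simpa only [SetLike.mem_coe, mem_flag, not_forall, exists_prop] using hw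
  refine hX'.not_ge fun v hv => ?_
  have hdiff : v - (v i / w i) • w ∈ flag F r k := by
    intro j hj
    rw [Pi.sub_apply, Pi.smul_apply, smul_eq_mul]
    by_cases hij : j = i
    · rw [hij, div_mul_cancel₀ _ hwi, sub_self]
    · have hrj : k + 1 ≤ r j := by
        have hri : r i < k + 1 := not_le.mp fun hle => hwi (hX'.le hwX i hle)
        have hne : r j ≠ r i := hr.ne hij
        lia
      rw [hv j hrj, hX'.le hwX j hrj, mul_zero, sub_zero]
  rw [← sub_add_cancel v ((v i / w i) • w)]
  exact add_mem (hX.le hdiff) (X.smul_mem _ hwX)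

variable [Fintype ι]

/-- Looks at the last nonzero coordinate of `v`, which `N` moves exactly one step. -/
theorem mem_flag_succ_of_mulVec_mem_flag (hr : Injective r)
    (hpred : ∀ i, 0 < r i → ∃ j, r i = r j + 1) {N : Matrix ι ι F} (hN : N ∈ raising F r 1)
    (hregular : ∀ i j, r j = r i + 1 → N i j ≠ 0) {v : ι → F} (hv : N *ᵥ v ∈ flag F r k) :
    v ∈ flag F r (k + 1) := by
  classical
  intro i hi
  by_contra hvi
  obtain ⟨m, hm, hmax⟩ := exists_max_image {i | v i ≠ 0} r ⟨i, mem_filter_univ i |>.mpr hvi⟩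
  rw [mem_filter_univ] at hm
  have hmk : k + 1 ≤ r m := hi.trans (hmax i (mem_filter_univ i |>.mpr hvi))
  obtain ⟨j, hj⟩ := hpred m (by lia)
  have hsum : (N *ᵥ v) j = N j m * v m := by
    refine Fintype.sum_eq_single m fun l hlm => by_contra fun hne => hlm (hr ?_)
    have hjl := hN j l (left_ne_zero_of_mul hne)
    have hlm' := hmax l (mem_filter_univ l |>.mpr (right_ne_zero_of_mul hne))
    lia
  exact mul_ne_zero (hregular j m hj) hm (hsum.symm.trans (hv j (by lia)))

end Flag

section PGroup

variable {p : ℕ} [Fact p.Prime] {Q F V : Type*} [Group Q] [Field F] [AddCommGroup V] [Module F V]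

theorem invariants_ne_bot (hQ : IsPGroup p Q) (hF : p ∣ Nat.card F) [Finite V] [Nontrivial V]
    (ρ : Representation F Q V) : ρ.invariants ≠ ⊥ := by
  let _ : MulAction Q V := MulAction.compHom V ρ
  have hV : p ∣ Nat.card V := by
    rw [Module.natCard_eq_pow_finrank (K := F)]
    exact dvd_pow hF Module.finrank_pos.ne'
  obtain ⟨v, hv, hv0⟩ := hQ.exists_fixed_point_of_prime_dvd_card_of_fixed_point V hV
    (a := 0) fun g => map_zero (ρ g)
  exact (Submodule.ne_bot_iff _).mpr ⟨v, hv, hv0.symm⟩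

/-- The `p`-group has a nonzero fixed vector on `V ⧸ W`, and `W'` leaves room for only one line of
them. -/
theorem sub_mem_of_wcovBy (hQ : IsPGroup p Q) (hF : p ∣ Nat.card F) [Finite V]
    (ρ : Representation F Q V) {W W' : Submodule F V} (hW : W ⩿ W')
    (hinvariant : ∀ g, W ≤ W.comap (ρ g)) (hfixed : ∀ v, (∀ g, ρ g v - v ∈ W) → v ∈ W')
    (g : Q) {v : V} (hv : v ∈ W') : ρ g v - v ∈ W := by
  set X := (ρ.quotient W hinvariant).invariants.comap W.mkQ
  have hX {w : V} : w ∈ X ↔ ∀ g, ρ g w - w ∈ W :=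
    forall_congr' fun g => Submodule.Quotient.eq W
  by_cases htop : W = ⊤
  · exact htop ▸ Submodule.mem_top
  have hWX : W ≤ X := fun w hw => hX.mpr fun g => sub_mem (hinvariant g hw) hw
  obtain hXW | hXW' := hW.eq_or_eq hWX fun w hw => hfixed w (hX.mp hw)
  · have : Finite (V ⧸ W) := Finite.of_surjective _ W.mkQ_surjective
    have : Nontrivial (V ⧸ W) := Submodule.Quotient.nontrivial_iff.mpr htop
    refine absurd ?_ (invariants_ne_bot hQ hF (ρ.quotient W hinvariant))
    apply Submodule.comap_injective_of_surjective W.mkQ_surjective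
    rw [Submodule.comap_bot, Submodule.ker_mkQ]
    exact hXW
  · exact hX.mp (hXW' ▸ hv) g

end PGroup

section UnipotentRepresentation

variable {p : ℕ} [Fact p.Prime] {Q ι F : Type*} [Group Q] [Fintype ι] [DecidableEq ι] [Field F]
  [Finite F] {r : ι → ℕ} {φ : Q →* Matrix ι ι F} {u : Q}

theorem mulVec_sub_mem_flag (hQ : IsPGroup p Q) (hF : p ∣ Nat.card F) (hr : Injective r)
    (hpred : ∀ i, 0 < r i → ∃ j, r i = r j + 1) (hu : φ u - 1 ∈ raising F r 1)
    (hregular : ∀ i j, r j = r i + 1 → (φ u - 1) i j ≠ 0) (k : ℕ) (g : Q) {v : ι → F}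
    (hv : v ∈ flag F r (k + 1)) : φ g *ᵥ v - v ∈ flag F r k := by
  set ρ : Representation F Q (ι → F) := (toLinAlgEquiv' : _ ≃ₐ[F] _).toMonoidHom.comp φ
  have hfixed (k : ℕ) (v : ι → F) (hv : ∀ g, ρ g v - v ∈ flag F r k) : v ∈ flag F r (k + 1) := by
    refine mem_flag_succ_of_mulVec_mem_flag hr hpred hu hregular ?_
    rw [sub_mulVec, one_mulVec]
    exact hv u
  induction k generalizing g v with
  | zero =>
    refine sub_mem_of_wcovBy hQ hF ρ (flag_wcovBy hr) (fun g w hw => ?_) (hfixed 0) g hv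
    have hw0 : w = 0 := funext fun i => hw i (Nat.zero_le _)
    rw [hw0]
    exact zero_mem _
  | succ k ih =>
    refine sub_mem_of_wcovBy hQ hF ρ (flag_wcovBy hr) (fun g w hw => ?_) (hfixed _) g hv
    have hle : flag F r k ≤ flag F r (k + 1) := (flag_wcovBy hr).le
    exact (Submodule.sub_mem_iff_left _ hw).mp (hle (ih g hw))

theorem sub_one_mem_raising_of_isPGroup (hQ : IsPGroup p Q) (hF : p ∣ Nat.card F)
    (hr : Injective r) (hpred : ∀ i, 0 < r i → ∃ j, r i = r j + 1) (hu : φ u - 1 ∈ raising F r 1)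
    (hregular : ∀ i j, r j = r i + 1 → (φ u - 1) i j ≠ 0) (g : Q) :
    φ g - 1 ∈ raising F r 1 := by
  intro i j hij
  by_contra hlt
  have hsingle : Pi.single j 1 ∈ flag F r (r j + 1) := fun l hl =>
    Pi.single_eq_of_ne (by rintro rfl; lia) _
  have hzero := mulVec_sub_mem_flag hQ hF hr hpred hu hregular (r j) g hsingle i (by lia)
  rw [mulVec_single_one, Pi.sub_apply, col_apply, Pi.single_apply, ← one_apply] at hzero
  exact hij hzero

end UnipotentRepresentation

theorem card_conjClasses_mul_card {α G : Type*} [Group G] [Fintype α] {s : α × α → Prop}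
    [DecidablePred s] (e : α ≃ G) (he : ∀ x y, Commute (e x) (e y) ↔ s (x, y)) :
    Nat.card (ConjClasses G) * Fintype.card α = #{x : α × α | s x} := by
  rw [← Nat.card_eq_fintype_card, Nat.card_congr e, ← card_comm_eq_card_conjClasses_mul_card,
    ← Fintype.card_subtype, ← Nat.card_eq_fintype_card]
  exact Nat.card_congr ((e.prodCongr e).subtypeEquiv fun x => (he x.1 x.2).symm).symm

section SymplecticSylow

variable {l : Type*} [Fintype l] [DecidableEq l]

/-- The symplectic matrices that are unipotent with respect to the flag of `r`. -/
def unipotentSubgroup (F : Type*) [CommRing F] (r : l ⊕ l → ℕ) :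
    Subgroup (symplecticGroup l F) where
  carrier := {g | (g : Matrix (l ⊕ l) (l ⊕ l) F) - 1 ∈ raising F r 1}
  one_mem' := by simp [zero_mem]
  mul_mem' {g h} hg hh := by
    have hgh : (g : Matrix (l ⊕ l) (l ⊕ l) F) * h - 1 = (g - 1) * (h - 1) + (g - 1) + (h - 1) := by
      noncomm_ring
    rw [Set.mem_ofPred_eq, Submonoid.coe_mul, hgh]
    exact add_mem (add_mem (raising_antitone one_le_two (mul_mem_raising hg hh)) hg) hh
  inv_mem' {g} hg := by
    rw [Set.mem_ofPred_eq, SymplecticGroup.coe_inv']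
    exact inv_sub_one_mem_raising hg

theorem nonempty_mulEquiv_unipotentSubgroup {F : Type*} [Field F] [Finite F] {p : ℕ}
    [Fact p.Prime] (hF : p ∣ Nat.card F) {r : l ⊕ l → ℕ} (hr : Injective r)
    (hpred : ∀ i, 0 < r i → ∃ j, r i = r j + 1) (hU : IsPGroup p (unipotentSubgroup F r))
    {u : symplecticGroup l F} (hu : u ∈ unipotentSubgroup F r)
    (hregular : ∀ i j, r j = r i + 1 → (u.1 - 1) i j ≠ 0) (P : Sylow p (symplecticGroup l F)) :
    Nonempty (P ≃* unipotentSubgroup F r) := by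
  obtain ⟨Q, hUQ⟩ := hU.exists_le_sylow
  have hQU : (Q : Subgroup (symplecticGroup l F)) ≤ unipotentSubgroup F r := fun g hg =>
    sub_one_mem_raising_of_isPGroup
      (φ := (symplecticGroup l F).subtype.comp (Q : Subgroup _).subtype)
      (u := ⟨u, hUQ hu⟩) Q.isPGroup' hF hr hpred hu hregular ⟨g, hg⟩
  exact hUQ.antisymm hQU ▸ ⟨P.equiv Q⟩

end SymplecticSylow

section SymplecticCayley

variable {n : ℕ} {F : Type*} [Field F]

/-- The ordering `1, …, n, 2 n, …, n + 1` of the coordinates, whose flag consists of isotropic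
subspaces and their orthogonal complements. -/
def flagRank : Fin n ⊕ Fin n → ℕ := Sum.elim (fun i => i) fun j => n + j.rev

theorem flagRank_injective : Injective (flagRank (n := n)) := by
  rintro (i | i) (j | j) hij <;> simp only [flagRank, Sum.elim_inl, Sum.elim_inr] at hij <;>
    grind

theorem exists_flagRank_eq_add_one {i : Fin n ⊕ Fin n} (hi : 0 < flagRank i) :
    ∃ j, flagRank i = flagRank (n := n) j + 1 := by
  obtain i | i := i
  · exact ⟨.inl ⟨i - 1, by lia⟩, by simp_all [flagRank]; lia⟩
  · by_cases hlast : i.1 + 1 < n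
    · exact ⟨.inr ⟨i + 1, hlast⟩, by simp [flagRank, Fin.rev]; lia⟩
    · exact ⟨.inl i, by simp [flagRank, Fin.rev]; lia⟩

theorem fromBlocks_mem_sp_iff {l R : Type*} [Fintype l] [DecidableEq l] [CommRing R]
    {A B C D : Matrix l l R} :
    fromBlocks A B C D ∈ LieAlgebra.Symplectic.sp l R ↔ Bᵀ = B ∧ Cᵀ = C ∧ D = -Aᵀ := by
  rw [LieAlgebra.Symplectic.sp, mem_skewAdjointMatricesLieSubalgebra,
    mem_skewAdjointMatricesSubmodule, Matrix.IsSkewAdjoint, Matrix.IsAdjointPair]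
  simp only [J, fromBlocks_transpose, fromBlocks_neg, fromBlocks_multiply, fromBlocks_inj,
    Matrix.mul_zero, Matrix.zero_mul, Matrix.mul_neg, Matrix.neg_mul, Matrix.mul_one,
    Matrix.one_mul, zero_add, add_zero, neg_neg, neg_zero]
  have hD : Dᵀ = -A ↔ D = -Aᵀ := by rw [← transpose_inj, transpose_transpose, transpose_neg]
  rw [hD]
  grind

theorem spMatrix_mem_sp (x : Fin n × Fin n → F) :
    spMatrix x ∈ LieAlgebra.Symplectic.sp (Fin n) F :=
  fromBlocks_mem_sp_iff.mpr ⟨symmBlock_transpose x, transpose_zero, rfl⟩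

theorem spMatrix_mem_raising (x : Fin n × Fin n → F) : spMatrix x ∈ raising F flagRank 1 := by
  rintro (i | i) (j | j) hij <;>
    simp only [spMatrix_apply, fromBlocks_apply₁₁, fromBlocks_apply₁₂, fromBlocks_apply₂₁,
      fromBlocks_apply₂₂, Matrix.neg_apply, transpose_apply, leviBlock_apply, symmBlock_apply,
      Matrix.zero_apply] at hij <;>
    simp [flagRank, Fin.rev] <;> grind

theorem exists_spMatrix_eq {N : Matrix (Fin n ⊕ Fin n) (Fin n ⊕ Fin n) F}
    (hN : N ∈ raising F flagRank 1) (hsp : N ∈ LieAlgebra.Symplectic.sp (Fin n) F) :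
    ∃ x, spMatrix x = N := by
  obtain ⟨A, B, C, D, rfl⟩ : ∃ A B C D, N = fromBlocks A B C D :=
    ⟨_, _, _, _, (fromBlocks_toBlocks N).symm⟩
  obtain ⟨hB, -, rfl⟩ := fromBlocks_mem_sp_iff.mp hsp
  have hA (i j : Fin n) (hij : A i j ≠ 0) : i < j := by
    simpa [flagRank] using hN (.inl i) (.inl j) hij
  have hC : C = 0 := by
    ext i j
    by_contra hij
    have hlt := hN (.inr i) (.inl j) hij
    simp only [flagRank, Sum.elim_inr, Sum.elim_inl] at hlt
    lia
  refine ⟨fun ij => if ij.1 < ij.2 then A ij.1 ij.2 else B ij.1 ij.2, ?_⟩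
  have hlevi : leviBlock (fun ij => if ij.1 < ij.2 then A ij.1 ij.2 else B ij.1 ij.2) = A := by
    ext i j
    rw [leviBlock_apply]
    grind
  have hsymm : symmBlock (fun ij => if ij.1 < ij.2 then A ij.1 ij.2 else B ij.1 ij.2) = B := by
    ext i j
    have hij : B j i = B i j := congrFun₂ hB i j
    rw [symmBlock_apply, symmIndex]
    grind
  rw [spMatrix_apply, hlevi, hsymm, hC]

theorem spMatrix_one_ne_zero {i j : Fin n ⊕ Fin n} (hij : flagRank j = flagRank i + 1) :
    spMatrix (1 : Fin n × Fin n → F) i j ≠ 0 := by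
  rcases i with i | i <;> rcases j with j | j <;>
    simp only [flagRank, Sum.elim_inl, Sum.elim_inr, Fin.rev] at hij <;>
    simp [spMatrix_apply, leviBlock_apply, symmBlock_apply] <;> lia

theorem isUnit_two_matrix (h2 : (2 : F) ≠ 0) {ι : Type*} [Fintype ι] [DecidableEq ι] :
    IsUnit (2 : Matrix ι ι F) := by
  simpa only [map_ofNat] using h2.isUnit.map (algebraMap F (Matrix ι ι F))

theorem isUnit_one_sub_spMatrix (x : Fin n × Fin n → F) : IsUnit (1 - spMatrix x) :=
  isUnit_one_sub_of_mem_raising (spMatrix_mem_raising x)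

/-- The Cayley transform as a parametrization of the unipotent group by its Lie algebra. -/
noncomputable def cayleyUnipotent (h2 : (2 : F) ≠ 0) (x : Fin n × Fin n → F) :
    unipotentSubgroup F (flagRank (n := n)) :=
  ⟨⟨cayley (spMatrix x), (cayley_mem_symplecticGroup_iff (isUnit_two_matrix h2)
    (isUnit_one_sub_spMatrix x)).mpr (spMatrix_mem_sp x)⟩,
    cayley_sub_one_mem_raising (spMatrix_mem_raising x)⟩

theorem cayleyUnipotent_bijective (h2 : (2 : F) ≠ 0) :
    Bijective (cayleyUnipotent (n := n) h2) := by
  refine ⟨fun x y hxy => spMatrix_injective ?_, fun g => ?_⟩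
  · have hcayley : cayley (spMatrix x) = cayley (spMatrix y) :=
      congrArg Subtype.val (congrArg Subtype.val hxy)
    exact cayley_injOn (isUnit_two_matrix h2) (isUnit_one_sub_spMatrix x)
      (isUnit_one_sub_spMatrix y) hcayley
  · obtain ⟨N, hN, hNg⟩ := exists_cayley_eq h2.isUnit g.2
    have hsp := (cayley_mem_symplecticGroup_iff (isUnit_two_matrix h2)
      (isUnit_one_sub_of_mem_raising hN)).mp (hNg ▸ g.1.2)
    obtain ⟨x, rfl⟩ := exists_spMatrix_eq hN hsp
    exact ⟨x, Subtype.ext (Subtype.ext hNg)⟩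

theorem commute_cayleyUnipotent_iff (h2 : (2 : F) ≠ 0) (x y : Fin n × Fin n → F) :
    Commute (cayleyUnipotent h2 x) (cayleyUnipotent h2 y) ↔ (spTable n).bracket F x y = 0 := by
  rw [← map_eq_zero_iff spMatrix spMatrix_injective, spMatrix_bracket, sub_eq_zero]
  change _ ↔ Commute _ _
  rw [← commute_cayley_iff (isUnit_two_matrix h2) (isUnit_one_sub_spMatrix x)
    (isUnit_one_sub_spMatrix y), commute_iff_eq, commute_iff_eq, Subtype.ext_iff, Subtype.ext_iff]
  rfl

theorem cayleyUnipotent_one_sub_one_ne_zero (h2 : (2 : F) ≠ 0) {i j : Fin n ⊕ Fin n}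
    (hij : flagRank j = flagRank i + 1) : ((cayleyUnipotent h2 1).1.1 - 1) i j ≠ 0 := by
  have hdiff := not_imp_comm.mp (cayley_sub_one_sub_mem_raising
    (spMatrix_mem_raising (F := F) 1) i j) (by lia)
  rw [Matrix.sub_apply, sub_eq_zero, Matrix.add_apply, ← two_mul] at hdiff
  exact hdiff ▸ mul_ne_zero h2 (spMatrix_one_ne_zero hij)

end SymplecticCayley

section SymplecticClasses

variable {p n : ℕ} [Fact p.Prime] {F : Type*} [Field F] [Fintype F]

theorem nonempty_sylow_mulEquiv (h2 : (2 : F) ≠ 0) {m : ℕ} (hF : Fintype.card F = p ^ m)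
    (P : Sylow p (symplecticGroup (Fin n) F)) :
    Nonempty (P ≃* unipotentSubgroup F (flagRank (n := n))) := by
  have hU : IsPGroup p (unipotentSubgroup F (flagRank (n := n))) := by
    refine IsPGroup.of_card (n := m * Fintype.card (Fin n × Fin n)) ?_
    rw [← Nat.card_eq_of_bijective _ (cayleyUnipotent_bijective h2), Nat.card_eq_fintype_card,
      Fintype.card_fun, hF, pow_mul]
  have hm : m ≠ 0 := by
    rintro rfl
    exact (Fintype.one_lt_card (α := F)).ne' (hF.trans (pow_zero p))
  have hdvd : p ∣ Nat.card F := by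
    rw [Nat.card_eq_fintype_card, hF]
    exact dvd_pow_self p hm
  exact nonempty_mulEquiv_unipotentSubgroup hdvd flagRank_injective
    (fun _ => exists_flagRank_eq_add_one) hU (cayleyUnipotent h2 1).2
    (fun _ _ => cayleyUnipotent_one_sub_one_ne_zero h2) P

theorem card_conjClasses_sylow_symplecticGroup (h2 : (2 : F) ≠ 0) {m v fuel : ℕ} {c : List ℕ}
    (hF : Fintype.card F = p ^ m) (hv : Fintype.card F = v + 1)
    (hc : BracketTable.radicalPairCoeffs (n * n) fuel (spTable n) [] 0 = some c)
    (P : Sylow p (symplecticGroup (Fin n) F)) : Nat.card (ConjClasses P) = Nat.ofDigits v c := by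
  classical
  obtain ⟨e⟩ := nonempty_sylow_mulEquiv h2 hF P
  have hcard : Fintype.card (Fin n × Fin n) = n * n := by
    rw [Fintype.card_prod, Fintype.card_fin]
  have hcount := card_conjClasses_mul_card
    ((Equiv.ofBijective _ (cayleyUnipotent_bijective h2)).trans e.symm.toEquiv)
    (s := fun x => (spTable n).bracket F x.1 x.2 = 0)
    fun x y => (commute_map_iff e.symm.injective).trans (commute_cayleyUnipotent_iff h2 x y)
  rw [card_apply_eq_zero, BracketTable.radicalPairCount_of_radicalPairCoeffs h2 hv hcard
    (hasExpAd_bracket_spTable h2) List.nodup_nil hc, Fintype.card_fun, hcard, hv, mul_comm,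
    add_zero] at hcount
  exact Nat.eq_of_mul_eq_mul_left (by positivity) hcount

end SymplecticClasses

set_option maxRecDepth 100000 in
theorem radicalPairCoeffs_spTable_six :
    BracketTable.radicalPairCoeffs (6 * 6) 200 (spTable 6) [] 0 =
      some [1, 36, 410, 1960, 4560, 5701, 4121, 1845, 547, 112, 15, 1] := by
  decide +kernel

/-- The number of conjugacy classes of a Sylow `p`-subgroup of `Sp_12(F_q)`,
for `p` an odd prime and `q` a power of `p`, written in `v = q - 1`. -/
theorem card_conjClasses_sylow_sp12 (p q : ℕ) (hp : p.Prime) (hodd : Odd p)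
    (hq : ∃ n : ℕ, 0 < n ∧ q = p ^ n)
    (F : Type*) [Field F] [Fintype F] (hF : Fintype.card F = q)
    (P : Sylow p (Matrix.symplecticGroup (Fin 6) F)) (v : ℕ) (hv : v = q - 1) :
    Nat.card (ConjClasses (P : Subgroup (Matrix.symplecticGroup (Fin 6) F))) =
      v ^ 11 + 15 * v ^ 10 + 112 * v ^ 9 + 547 * v ^ 8 + 1845 * v ^ 7 + 4121 * v ^ 6 + 5701 * v ^ 5 + 4560 * v ^ 4 + 1960 * v ^ 3 + 410 * v ^ 2 + 36 * v + 1 := by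
  have : Fact p.Prime := ⟨hp⟩
  obtain ⟨m, -, hqm⟩ := hq
  have hcard : Fintype.card F = v + 1 := by
    have hpos : 0 < Fintype.card F := Fintype.card_pos
    lia
  have h2 : (2 : F) ≠ 0 := by
    refine Ring.two_ne_zero fun hchar => ?_
    rw [FiniteField.even_card_iff_char_two, hF, hqm, ← Nat.even_iff] at hchar
    exact Nat.not_even_iff_odd.mpr hodd.pow hchar
  have hclasses :=
    card_conjClasses_sylow_symplecticGroup h2 (hF.trans hqm) hcard radicalPairCoeffs_spTable_six P
  refine hclasses.trans ?_
  simp only [Nat.ofDigits_cons, Nat.ofDigits_nil]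
  ring
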